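/- arXiv:1705.00807 — 4 statements merged into one kernel-verified Lean document; each statement's English description precedes it below -/
import Mathlib

section
/- For every constant A ≥ 1 there exist a constant C > 0 and an integer N₀ (depending only on A) such that for all integers S ≥ 2 and n with N₀ ≤ n ≤ S^A, there exists an estimator L̂ : ℕ^S × ℕ^S → ℝ such that, in the two-sample Poisson sampling model with sample size n, sup_{P,Q ∈ M_S} E (L̂(X,Y) − L_1(P,Q))² ≤ C·S/(n ln n). -/
open scoped BigOperators ENNReal

/-- The Poisson(lam) probability mass function on the nonnegative integers. -/
noncomputable def poissonPMF (lam : ℝ) (k : ℕ) : ℝ :=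
  Real.exp (-lam) * lam ^ k / (Nat.factorial k)

/-- `P` is a probability vector on `{1,…,S}` (an element of `M_S`). -/
def IsDist {S : ℕ} (p : Fin S → ℝ) : Prop :=
  (∀ i, 0 ≤ p i) ∧ ∑ i, p i = 1

/-- Joint pmf of `S` independent coordinates `X_i ~ Poisson(n p_i)`. -/
noncomputable def prodPMF {S : ℕ} (n : ℕ) (p : Fin S → ℝ) (x : Fin S → ℕ) : ℝ :=
  ∏ i, poissonPMF (n * p i) (x i)

/-- Joint pmf of the two-sample Poisson model: all of
`X_i ~ Poisson(n p_i)`, `Y_i ~ Poisson(n q_i)` mutually independent. -/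
noncomputable def prodPMF2 {S : ℕ} (n : ℕ) (p q : Fin S → ℝ)
    (xy : (Fin S → ℕ) × (Fin S → ℕ)) : ℝ :=
  prodPMF n p xy.1 * prodPMF n q xy.2

/-- The `L₁` distance between two vectors. -/
noncomputable def L1dist {S : ℕ} (p q : Fin S → ℝ) : ℝ :=
  ∑ i, |p i - q i|

/-- The mean squared error `E (est(X,Y) - L)²` in the two-sample Poisson sampling model. -/
noncomputable def risk2 {S : ℕ} (n : ℕ) (p q : Fin S → ℝ) (L : ℝ)
    (est : (Fin S → ℕ) × (Fin S → ℕ) → ℝ) : ℝ≥0∞ :=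
  ∑' xy : (Fin S → ℕ) × (Fin S → ℕ),
    ENNReal.ofReal (prodPMF2 n p q xy * (est xy - L) ^ 2)

section Helpers
open MeasureTheory ProbabilityTheory Set

noncomputable def kerU (u w : ℝ) : ℝ := (1 - Real.cos (w * u)) / w ^ 2

lemma kerU_nonneg (u w : ℝ) : 0 ≤ kerU u w := by
  unfold kerU
  have := Real.cos_le_one (w * u)
  apply div_nonneg <;> nlinarith [sq_nonneg w]

lemma kerU_le_two (u w : ℝ) : kerU u w ≤ 2 / w ^ 2 := by
  unfold kerU
  have := Real.neg_one_le_cos (w * u)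
  gcongr
  linarith

lemma kerU_le_sq (u w : ℝ) : kerU u w ≤ u ^ 2 / 2 := by
  unfold kerU
  rcases eq_or_ne w 0 with rfl | hw
  · simp; positivity
  have := Real.one_sub_sq_div_two_le_cos (x := w * u)
  rw [div_le_iff₀ (by positivity)]
  nlinarith

lemma kerU_meas (u : ℝ) : Measurable (kerU u) := by
  unfold kerU; fun_prop

lemma two_div_sq_int {a : ℝ} (ha : 0 < a) : IntegrableOn (fun w : ℝ => 2 / w ^ 2) (Ioi a) := by
  have := (integrableOn_Ioi_rpow_of_lt (a := -2) (by norm_num) ha).const_mul 2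
  refine IntegrableOn.congr_fun this ?_ measurableSet_Ioi
  intro x hx
  have hx : 0 < x := lt_trans ha hx
  simp [Real.rpow_neg hx.le, div_eq_mul_inv]

lemma two_div_sq_integral {a : ℝ} (ha : 0 < a) : ∫ w in Ioi a, 2 / w ^ 2 = 2 / a := by
  have := integral_Ioi_rpow_of_lt (a := -2) (by norm_num) ha
  have h2 : ∫ w in Ioi a, 2 / w ^ 2 = ∫ w in Ioi a, 2 * w ^ (-2 : ℝ) := by
    refine setIntegral_congr_fun measurableSet_Ioi ?_
    intro x hx
    have hx : 0 < x := lt_trans ha hx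
    simp [Real.rpow_neg hx.le, div_eq_mul_inv]
  rw [h2, integral_const_mul, this]
  norm_num [Real.rpow_neg_one]
  rfl

lemma kerU_int_Ioc (u W : ℝ) : IntegrableOn (kerU u) (Ioc 0 W) := by
  refine Measure.integrableOn_of_bounded (M := u ^ 2 / 2) (by simp)
    (kerU_meas u).aestronglyMeasurable ?_
  refine Filter.Eventually.of_forall fun w => ?_
  rw [Real.norm_of_nonneg (kerU_nonneg u w)]
  exact kerU_le_sq u w

lemma kerU_int_Ioi (u : ℝ) {W : ℝ} (hW : 0 < W) : IntegrableOn (kerU u) (Ioi W) := by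
  refine Integrable.mono' (two_div_sq_int hW) (kerU_meas u).aestronglyMeasurable ?_
  refine Filter.Eventually.of_forall fun w => ?_
  rw [Real.norm_of_nonneg (kerU_nonneg u w)]
  exact kerU_le_two u w

lemma kerU_int (u : ℝ) : IntegrableOn (kerU u) (Ioi 0) := by
  rw [← Ioc_union_Ioi_eq_Ioi (zero_le_one' ℝ)]
  exact (kerU_int_Ioc u 1).union (kerU_int_Ioi u one_pos)

noncomputable def JJ : ℝ := ∫ w in Ioi (0:ℝ), kerU 1 w

lemma JJ_pos : 0 < JJ := by
  unfold JJ
  have h1 : 0 ≤ ∫ w in Ioi (1:ℝ), kerU 1 w := setIntegral_nonneg measurableSet_Ioi (fun w _ => kerU_nonneg 1 w)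
  have h0 : ∫ w in Ioi (0:ℝ), kerU 1 w = (∫ w in Ioc (0:ℝ) 1, kerU 1 w) + ∫ w in Ioi (1:ℝ), kerU 1 w := by
    rw [← Ioc_union_Ioi_eq_Ioi (zero_le_one' ℝ)]
    exact setIntegral_union (Ioc_disjoint_Ioi le_rfl) measurableSet_Ioi (kerU_int_Ioc 1 1) (kerU_int_Ioi 1 one_pos)
  have h2 : 0 < ∫ w in Ioc (0:ℝ) 1, kerU 1 w := by
    rw [← intervalIntegral.integral_of_le zero_le_one]
    refine intervalIntegral.intervalIntegral_pos_of_pos_on ?_ ?_ one_pos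
    · rw [intervalIntegrable_iff_integrableOn_Ioc_of_le zero_le_one]; exact kerU_int_Ioc 1 1
    · intro w hw
      unfold kerU
      have : Real.cos (w * 1) < 1 := by
        rw [mul_one, ← Real.cos_zero]
        exact Real.cos_lt_cos_of_nonneg_of_le_pi le_rfl (by linarith [hw.2, Real.pi_gt_three]) hw.1
      have := hw.1
      apply div_pos <;> [linarith; positivity]
  linarith

lemma abs_repr (u : ℝ) : ∫ w in Ioi (0:ℝ), kerU u w = |u| * JJ := by
  rcases eq_or_ne u 0 with rfl | hu
  · simp [kerU]
  have hpos : 0 < |u| := abs_pos.mpr hu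
  have := integral_comp_mul_left_Ioi (kerU 1) 0 hpos
  rw [mul_zero] at this
  have h2 : ∀ w, kerU u w = u ^ 2 * kerU 1 (|u| * w) := by
    intro w
    unfold kerU
    have : Real.cos (w * u) = Real.cos (|u| * w * 1) := by
      rw [← Real.cos_abs, abs_mul, ← Real.cos_abs (|u| * w * 1)]
      congr 1
      simp [abs_mul, mul_comm]
    rw [this, mul_pow, sq_abs]
    rcases eq_or_ne w 0 with rfl | hw
    · simp
    field_simp
  simp_rw [h2]
  rw [integral_const_mul, this, smul_eq_mul]
  unfold JJ
  rw [← sq_abs]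
  field_simp

noncomputable def kerH (x w : ℝ) : ℝ := (1 - Real.exp (w ^ 2 / 2) * Real.cos (w * x)) / w ^ 2

noncomputable def hfun (W x : ℝ) : ℝ := JJ⁻¹ * ∫ w in Ioc 0 W, kerH x w

noncomputable def corr (x w : ℝ) : ℝ := (Real.exp (w ^ 2 / 2) - 1) / w ^ 2 * Real.cos (w * x)

lemma kerH_eq (x w : ℝ) : kerH x w = kerU x w - corr x w := by
  unfold kerH kerU corr; ring

lemma corr_bound {W w : ℝ} (x : ℝ) (hw : w ∈ Ioc 0 W) : |corr x w| ≤ Real.exp (W ^ 2 / 2) / 2 := by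
  unfold corr
  rw [abs_mul]
  have h0 : 0 < w := hw.1
  have h1 : w ^ 2 / 2 ≤ W ^ 2 / 2 := by nlinarith [hw.1, hw.2]
  have h2 : Real.exp (w ^ 2 / 2) - 1 ≤ w ^ 2 / 2 * Real.exp (W ^ 2 / 2) := by
    have h3 : Real.exp (w ^ 2 / 2) - 1 ≤ w ^ 2 / 2 * Real.exp (w ^ 2 / 2) := by
      have := Real.add_one_le_exp (-(w ^ 2 / 2))
      have h5 : Real.exp (w ^ 2 / 2) * Real.exp (-(w ^ 2 / 2)) = 1 := by rw [← Real.exp_add]; simp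
      nlinarith [Real.exp_pos (w ^ 2 / 2)]
    refine h3.trans ?_
    gcongr
  have h4 : 0 ≤ (Real.exp (w ^ 2 / 2) - 1) / w ^ 2 := by
    apply div_nonneg _ (by positivity)
    have := Real.add_one_le_exp (w ^ 2 / 2)
    nlinarith [sq_nonneg w]
  rw [abs_of_nonneg h4]
  calc _ ≤ (Real.exp (w ^ 2 / 2) - 1) / w ^ 2 * 1 := by gcongr; exact Real.abs_cos_le_one _
    _ ≤ _ := by
      rw [mul_one, div_le_iff₀ (by positivity)]; linarith

lemma corr_meas (x : ℝ) : Measurable (corr x) := by unfold corr; fun_prop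

lemma corr_int (x W : ℝ) : IntegrableOn (corr x) (Ioc 0 W) := by
  refine Measure.integrableOn_of_bounded (M := Real.exp (W ^ 2 / 2) / 2) (by simp)
    (corr_meas x).aestronglyMeasurable ?_
  filter_upwards [ae_restrict_mem measurableSet_Ioc] with w hw
  exact corr_bound x hw

lemma kerU_split (x : ℝ) {W : ℝ} (hW : 0 < W) :
    |x| * JJ = (∫ w in Ioc 0 W, kerU x w) + ∫ w in Ioi W, kerU x w := by
  rw [← abs_repr, ← Ioc_union_Ioi_eq_Ioi hW.le]
  exact setIntegral_union (Ioc_disjoint_Ioi le_rfl) measurableSet_Ioi (kerU_int_Ioc x W) (kerU_int_Ioi x hW)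

lemma kerU_tail (x : ℝ) {W : ℝ} (hW : 0 < W) : |∫ w in Ioi W, kerU x w| ≤ 2 / W := by
  rw [abs_of_nonneg (setIntegral_nonneg measurableSet_Ioi (fun w _ => kerU_nonneg x w)),
    ← two_div_sq_integral hW]
  exact setIntegral_mono (kerU_int_Ioi x hW) (two_div_sq_int hW) (kerU_le_two x)

lemma hfun_bound (x : ℝ) {W : ℝ} (hW : 0 < W) :
    |(hfun W x - |x|)| ≤ JJ⁻¹ * (W * Real.exp (W ^ 2 / 2) / 2 + 2 / W) := by
  have hJ := JJ_pos
  have h1 : hfun W x - |x| = JJ⁻¹ * (-(∫ w in Ioc 0 W, corr x w) - ∫ w in Ioi W, kerU x w) := by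
    unfold hfun
    simp_rw [kerH_eq]
    rw [integral_sub (kerU_int_Ioc x W) (corr_int x W)]
    have := kerU_split x hW
    field_simp
    linarith
  have h2 : |∫ w in Ioc 0 W, corr x w| ≤ W * Real.exp (W ^ 2 / 2) / 2 := by
    have := norm_setIntegral_le_of_norm_le_const (μ := volume) (s := Ioc 0 W) (f := corr x)
      (C := Real.exp (W ^ 2 / 2) / 2) (by simp) (fun w hw => corr_bound x hw)
    simp [Measure.real, hW.le] at this
    linarith
  rw [h1, abs_mul, abs_of_pos (inv_pos.mpr hJ)]
  gcongr
  have h3 := kerU_tail x hW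
  rw [abs_le] at *
  constructor <;> linarith

noncomputable def Phi (W u : ℝ) : ℝ := JJ⁻¹ * ∫ w in Ioc 0 W, kerU u w

lemma Phi_bound (u : ℝ) {W : ℝ} (hW : 0 < W) : |(Phi W u - |u|)| ≤ 2 * JJ⁻¹ / W := by
  have hJ := JJ_pos
  have h1 : Phi W u - |u| = JJ⁻¹ * (- ∫ w in Ioi W, kerU u w) := by
    unfold Phi
    have := kerU_split u hW
    field_simp
    linarith
  rw [h1, abs_mul, abs_of_pos (inv_pos.mpr hJ), abs_neg]
  calc _ ≤ JJ⁻¹ * (2 / W) := by gcongr; exact kerU_tail u hW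
    _ = _ := by ring

lemma gauss_cos (u w : ℝ) : ∫ x, Real.cos (w * x) ∂gaussianReal u 1 = Real.exp (-(w ^ 2 / 2)) * Real.cos (w * u) := by
  have h := charFun_gaussianReal (μ := u) (v := 1) w
  rw [charFun_apply_real] at h
  have h2 := congrArg Complex.re h
  rw [← RCLike.re_eq_complex_re, ← integral_re] at h2
  · simp only [RCLike.re_eq_complex_re] at h2
    rw [Complex.exp_re] at h2
    simp [Complex.exp_re] at h2
    rw [h2]
    norm_cast
    simp
  · refine (integrable_const (1:ℝ)).mono' (by fun_prop) ?_
    refine Filter.Eventually.of_forall fun x => ?_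
    have : (w * x * Complex.I : ℂ) = ((w * x : ℝ) : ℂ) * Complex.I := by push_cast; ring
    rw [this, Complex.norm_exp_ofReal_mul_I]

lemma kerH_prod_int (u W : ℝ) : Integrable (fun z : ℝ × ℝ => kerH z.1 z.2)
    ((gaussianReal u 1).prod (volume.restrict (Ioc 0 W))) := by
  have hsq : Integrable (fun x : ℝ => x ^ 2 / 2 + Real.exp (W ^ 2 / 2) / 2) (gaussianReal u 1) := by
    refine Integrable.add ?_ (integrable_const _)
    exact ((memLp_id_gaussianReal' 2 (by simp)).integrable_sq).div_const 2
  refine (hsq.comp_fst (volume.restrict (Ioc 0 W))).mono' ?_ ?_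
  · apply Measurable.aestronglyMeasurable
    unfold kerH
    fun_prop
  · have : ∀ᵐ z ∂((gaussianReal u 1).prod (volume.restrict (Ioc 0 W))), z.2 ∈ Ioc 0 W := by
      have h := Measure.quasiMeasurePreserving_snd (μ := gaussianReal u 1) (ν := volume.restrict (Ioc 0 W))
      exact h.ae (ae_restrict_mem measurableSet_Ioc)
    filter_upwards [this] with z hz
    rw [kerH_eq, Real.norm_eq_abs]
    have h1 := corr_bound z.1 hz
    have h2 := kerU_nonneg z.1 z.2
    have h3 := kerU_le_sq z.1 z.2
    rw [abs_le] at *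
    constructor <;> linarith

lemma hfun_mean (u W : ℝ) : ∫ x, hfun W x ∂gaussianReal u 1 = Phi W u := by
  unfold hfun Phi
  rw [integral_const_mul, integral_integral_swap (kerH_prod_int u W)]
  congr 1
  refine setIntegral_congr_fun measurableSet_Ioc ?_
  intro w hw
  simp only [kerH, kerU]
  have hi : Integrable (fun x => Real.cos (w * x)) (gaussianReal u 1) := by
    refine (integrable_const (1:ℝ)).mono' (by fun_prop) ?_
    exact Filter.Eventually.of_forall fun x => Real.abs_cos_le_one _
  rw [integral_div, integral_sub (integrable_const _) (hi.const_mul _), integral_const_mul, gauss_cos,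
    ← mul_assoc, ← Real.exp_add]
  simp

lemma hfun_meas (W : ℝ) : Measurable (hfun W) := by
  unfold hfun
  apply Measurable.const_mul
  apply StronglyMeasurable.measurable
  apply StronglyMeasurable.integral_prod_right (f := fun x w => kerH x w)
  apply Measurable.stronglyMeasurable
  unfold kerH Function.uncurry
  fun_prop

lemma hfun_neg (W x : ℝ) : hfun W (-x) = hfun W x := by
  unfold hfun kerH
  simp


noncomputable def dens (x : ℕ) (w : ℝ) : ℝ :=
  w ^ (2 * x) * Real.exp (-w ^ 2) / Real.Gamma (x + 1 / 2)

lemma dens_meas (x : ℕ) : Measurable (dens x) := by unfold dens; fun_prop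

lemma dens_nonneg (x : ℕ) (w : ℝ) : 0 ≤ dens x w := by
  unfold dens
  have : 0 < Real.Gamma ((x : ℝ) + 1 / 2) := Real.Gamma_pos_of_pos (by positivity)
  have h : 0 ≤ w ^ (2 * x) := by rw [pow_mul]; positivity
  positivity

lemma dens_int (x : ℕ) : Integrable (dens x) := by
  unfold dens
  apply Integrable.div_const
  have := integrable_rpow_mul_exp_neg_mul_sq (b := 1) one_pos (s := ((2 * x : ℕ) : ℝ))
    (by have : (0:ℝ) ≤ ((2 * x : ℕ) : ℝ) := by positivity
        linarith)
  simp_rw [Real.rpow_natCast] at this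
  simpa using this

lemma dens_integral (x : ℕ) : ∫ w, dens x w = 1 := by
  have hG : 0 < Real.Gamma ((x : ℝ) + 1 / 2) := Real.Gamma_pos_of_pos (by positivity)
  unfold dens
  rw [integral_div, div_eq_one_iff_eq hG.ne']
  have h := integral_comp_abs (f := fun w : ℝ => w ^ (2 * x) * Real.exp (-w ^ 2))
  have h1 : ∀ w : ℝ, |w| ^ (2 * x) * Real.exp (-|w| ^ 2) = w ^ (2 * x) * Real.exp (-w ^ 2) := by
    intro w
    rw [pow_mul, pow_mul, sq_abs]
  simp_rw [h1] at h
  rw [h]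
  have h2 := integral_rpow_mul_exp_neg_rpow (p := 2) (q := ((2 * x : ℕ) : ℝ)) two_pos
    (by have : (0:ℝ) ≤ ((2 * x : ℕ) : ℝ) := by positivity
        linarith)
  simp_rw [Real.rpow_natCast, Real.rpow_two] at h2
  rw [h2]
  push_cast
  rw [show (2 * (x:ℝ) + 1) / 2 = x + 1 / 2 by ring]
  ring

lemma gamma_id (x : ℕ) : (x.factorial : ℝ) * Real.Gamma (x + 1 / 2) * 4 ^ x
    = ((2 * x).factorial : ℝ) * Real.sqrt Real.pi := by
  induction x with
  | zero =>
    have := Real.Gamma_one_half_eq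
    simp only [Nat.factorial, Nat.cast_one, CharP.cast_eq_zero, zero_add, this]
    simp
  | succ k ih =>
    have h := Real.Gamma_add_one (s := (k:ℝ) + 1 / 2) (by positivity)
    have e : ((k + 1 : ℕ) : ℝ) + 1 / 2 = (k:ℝ) + 1 / 2 + 1 := by push_cast; ring
    rw [e, h, show 2 * (k + 1) = 2 * k + 1 + 1 by ring, Nat.factorial_succ, Nat.factorial_succ, Nat.factorial_succ]
    push_cast
    have : ((k:ℝ) + 1) * k.factorial * (((k:ℝ) + 1 / 2) * Real.Gamma (k + 1 / 2)) * 4 ^ (k + 1)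
      = 4 * (k + 1) * (k + 1 / 2) * (k.factorial * Real.Gamma (k + 1 / 2) * 4 ^ k) := by ring
    rw [this, ih]
    ring

noncomputable def kap : Kernel ℕ ℝ :=
  Kernel.ofFunOfCountable fun x => volume.withDensity fun w => ENNReal.ofReal (dens x w)

lemma kap_apply (x : ℕ) : kap x = volume.withDensity fun w => ENNReal.ofReal (dens x w) := rfl

instance : IsMarkovKernel kap := ⟨fun x => ⟨by
  rw [kap_apply, withDensity_apply _ MeasurableSet.univ, Measure.restrict_univ,
    ← ofReal_integral_eq_lintegral_ofReal (dens_int x) (Filter.Eventually.of_forall (dens_nonneg x)),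
    dens_integral]
  simp⟩⟩

lemma hasSum_mix (a w : ℝ) :
    HasSum (fun x : ℕ => Real.exp (-(a ^ 2)) * (a ^ 2) ^ x / x.factorial * dens x w)
      ((gaussianPDFReal a (1/2) w + gaussianPDFReal (-a) (1/2) w) / 2) := by
  have h := (Real.hasSum_cosh (2 * a * w)).mul_left (Real.exp (-(a^2)) * Real.exp (-w^2) / Real.sqrt Real.pi)
  have key : ∀ {f g : ℕ → ℝ} {s t : ℝ}, HasSum f s → g = f → t = s → HasSum g t := by
    rintro f g s t h rfl rfl; exact h
  refine key h ?_ ?_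
  · ext x
    unfold dens
    have hg := gamma_id x
    have hG : 0 < Real.Gamma ((x : ℝ) + 1 / 2) := Real.Gamma_pos_of_pos (by positivity)
    have hp : 0 < Real.sqrt Real.pi := Real.sqrt_pos.mpr Real.pi_pos
    rw [div_mul_div_comm, div_mul_div_comm, div_eq_div_iff (by positivity) (by positivity)]
    have e : (2 * a * w) ^ (2 * x) = 4 ^ x * (a ^ 2) ^ x * w ^ (2 * x) := by
      rw [mul_pow, mul_pow, pow_mul 2, pow_mul a]; norm_num
    rw [e]
    linear_combination (-(Real.exp (-a^2) * (a^2)^x * w ^ (2 * x) * Real.exp (-w^2))) * hg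
  · rw [Real.cosh_eq]
    unfold gaussianPDFReal
    have e1 : Real.exp (-(w - a) ^ 2 / (2 * ((1/2 : NNReal) : ℝ))) = Real.exp (-(a^2)) * Real.exp (-w^2) * Real.exp (2 * a * w) := by
      rw [← Real.exp_add, ← Real.exp_add]; congr 1; push_cast; ring
    have e2 : Real.exp (-(w - -a) ^ 2 / (2 * ((1/2 : NNReal) : ℝ))) = Real.exp (-(a^2)) * Real.exp (-w^2) * Real.exp (-(2 * a * w)) := by
      rw [← Real.exp_add, ← Real.exp_add]; congr 1; push_cast; ring
    rw [e1, e2]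
    have e3 : 2 * Real.pi * ((1/2 : NNReal) : ℝ) = Real.pi := by push_cast; ring
    rw [e3]
    ring

lemma kap_comp (a : ℝ) (l : NNReal) (hl : (l : ℝ) = a ^ 2) :
    kap ∘ₘ poissonMeasure l = volume.withDensity (fun w => (gaussianPDF a (1/2) w + gaussianPDF (-a) (1/2) w) / 2) := by
  rw [Measure.comp_eq_sum_of_countable]
  simp_rw [kap_apply, poissonMeasure_singleton]
  have : ∀ x : ℕ, ENNReal.ofReal (Real.exp (-(l:ℝ)) * (l:ℝ) ^ x / x.factorial) •
      (volume.withDensity fun w => ENNReal.ofReal (dens x w)) =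
      volume.withDensity fun w => ENNReal.ofReal (Real.exp (-(a^2)) * (a^2) ^ x / x.factorial * dens x w) := by
    intro x
    rw [← withDensity_smul _ (by have := dens_meas x; fun_prop)]
    congr 1
    ext w
    rw [Pi.smul_apply, smul_eq_mul, ← ENNReal.ofReal_mul (by positivity), hl]
  simp_rw [this]
  rw [← withDensity_tsum]
  · congr 1
    ext w
    rw [tsum_apply (Pi.summable.2 fun _ => ENNReal.summable), ← ENNReal.ofReal_tsum_of_nonneg, (hasSum_mix a w).tsum_eq]
    · rw [ENNReal.ofReal_div_of_pos two_pos, ENNReal.ofReal_add (gaussianPDFReal_nonneg _ _ _) (gaussianPDFReal_nonneg _ _ _)]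
      simp [gaussianPDF]
    · intro x; have := dens_nonneg x w; positivity
    · exact (hasSum_mix a w).summable
  · intro x
    have := dens_meas x; fun_prop

lemma kap_map_abs (a : ℝ) (l : NNReal) (hl : (l : ℝ) = a ^ 2) :
    (kap ∘ₘ poissonMeasure l).map (fun w => |w|) = (gaussianReal a (1/2)).map (fun w => |w|) := by
  have hv : (1/2 : NNReal) ≠ 0 := by norm_num
  apply Measure.ext_of_lintegral
  intro F hF
  have hF' : Measurable fun w : ℝ => F |w| := hF.comp (by fun_prop)
  rw [lintegral_map hF (by fun_prop), lintegral_map hF (by fun_prop), kap_comp a l hl]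
  have hneg : ∫⁻ w, F |w| ∂(gaussianReal (-a) (1/2)) = ∫⁻ w, F |w| ∂(gaussianReal a (1/2)) := by
    rw [← gaussianReal_map_neg, lintegral_map hF' (by fun_prop)]
    simp
  have m1 := measurable_gaussianPDF a (1/2)
  have m2 := measurable_gaussianPDF (-a) (1/2)
  rw [lintegral_withDensity_eq_lintegral_mul _ (by fun_prop) hF']
  have e : ∀ w, ((fun w => (gaussianPDF a (1/2) w + gaussianPDF (-a) (1/2) w) / 2) * fun w => F |w|) w
    = 2⁻¹ * (gaussianPDF a (1/2) w * F |w| + gaussianPDF (-a) (1/2) w * F |w|) := by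
    intro w
    simp only [Pi.mul_apply, div_eq_mul_inv]; ring
  simp_rw [e]
  rw [lintegral_const_mul _ (by fun_prop), lintegral_add_left (by fun_prop)]
  have g : ∀ b, ∫⁻ w, gaussianPDF b (1/2) w * F |w| = ∫⁻ w, F |w| ∂(gaussianReal b (1/2)) := by
    intro b
    rw [gaussianReal_of_var_ne_zero _ hv, lintegral_withDensity_eq_lintegral_mul _ (measurable_gaussianPDF b _) hF']
    rfl
  rw [g, g, hneg, ← two_mul, ← mul_assoc, ENNReal.inv_mul_cancel (by simp) (by simp), one_mul]

noncomputable def kap2 : Kernel (ℕ × ℕ) (ℝ × ℝ) := kap ∥ₖ kap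

lemma kap2_comp (l m : NNReal) : kap2 ∘ₘ ((poissonMeasure l).prod (poissonMeasure m))
    = (kap ∘ₘ poissonMeasure l).prod (kap ∘ₘ poissonMeasure m) := by
  rw [Measure.prod_comp_right, Measure.prod_comp_left, Measure.comp_assoc, Kernel.parallelComp_comp_parallelComp]
  simp [kap2, Kernel.comp_id, Kernel.id_comp]

lemma kap2_map (a b : ℝ) (l m : NNReal) (hl : (l : ℝ) = a ^ 2) (hm : (m : ℝ) = b ^ 2) :
    (kap2 ∘ₘ ((poissonMeasure l).prod (poissonMeasure m))).map (Prod.map (fun w => |w|) (fun w => |w|))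
    = ((gaussianReal a (1/2)).prod (gaussianReal b (1/2))).map (Prod.map (fun w => |w|) (fun w => |w|)) := by
  rw [kap2_comp, ← Measure.map_prod_map _ _ (by fun_prop) (by fun_prop),
    ← Measure.map_prod_map _ _ (by fun_prop) (by fun_prop), kap_map_abs a l hl, kap_map_abs b m hm]

lemma rot_map (a b : ℝ) : ((gaussianReal a (1/2)).prod (gaussianReal b (1/2))).map (fun z => (z.1 - z.2, z.1 + z.2))
    = (gaussianReal (a - b) 1).prod (gaussianReal (a + b) 1) := by
  set P := (gaussianReal a (1/2)).prod (gaussianReal b (1/2)) with hP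
  have i0 : IndepFun (fun z : ℝ × ℝ => z.1) (fun z : ℝ × ℝ => z.2) P :=
    indepFun_prod (X := fun x : ℝ => x) (Y := fun x : ℝ => x) (by fun_prop) (by fun_prop)
  have l1 : P.map (fun z => z.1) = gaussianReal a (1/2) := by
    have := measurePreserving_fst (μ := gaussianReal a (1/2)) (ν := gaussianReal b (1/2))
    exact this.map_eq
  have l2 : P.map (fun z => z.2) = gaussianReal b (1/2) := by
    have := measurePreserving_snd (μ := gaussianReal a (1/2)) (ν := gaussianReal b (1/2))
    exact this.map_eq
  have g1 : HasGaussianLaw (fun z : ℝ × ℝ => z.1) P := ⟨by rw [l1]; infer_instance⟩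
  have g2 : HasGaussianLaw (fun z : ℝ × ℝ => z.2) P := ⟨by rw [l2]; infer_instance⟩
  have g : HasGaussianLaw (fun z : ℝ × ℝ => (z.1, z.2)) P := i0.hasGaussianLaw g1 g2
  have g' : HasGaussianLaw (fun z : ℝ × ℝ => (z.1 - z.2, z.1 + z.2)) P := by
    let L : ℝ × ℝ →L[ℝ] ℝ × ℝ := (ContinuousLinearMap.fst ℝ ℝ ℝ - ContinuousLinearMap.snd ℝ ℝ ℝ).prod
      (ContinuousLinearMap.fst ℝ ℝ ℝ + ContinuousLinearMap.snd ℝ ℝ ℝ)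
    exact g.map L
  have h1 := g1.memLp_two
  have h2 := g2.memLp_two
  have c : cov[fun z : ℝ × ℝ => z.1 - z.2, fun z : ℝ × ℝ => z.1 + z.2; P] = 0 := by
    have h0 := i0.covariance_eq_zero h1 h2
    have e := covariance_sub_left h1 h2 (h1.add h2)
    rw [covariance_add_right h1 h1 h2, covariance_add_right h2 h1 h2, h0, covariance_comm (fun z : ℝ × ℝ => z.2) (fun z : ℝ × ℝ => z.1), h0,
      covariance_self (by fun_prop), covariance_self (by fun_prop)] at e
    have v1 : Var[fun z : ℝ × ℝ => z.1; P] = 1 / 2 := by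
      have := variance_map (μ := P) (X := fun x : ℝ => x) (Y := fun z : ℝ × ℝ => z.1) (by fun_prop) (by fun_prop)
      rw [l1, variance_fun_id_gaussianReal] at this
      rw [show (fun z : ℝ × ℝ => z.1) = (fun x : ℝ => x) ∘ (fun z : ℝ × ℝ => z.1) from rfl, ← this]
      simp
    have v2 : Var[fun z : ℝ × ℝ => z.2; P] = 1 / 2 := by
      have := variance_map (μ := P) (X := fun x : ℝ => x) (Y := fun z : ℝ × ℝ => z.2) (by fun_prop) (by fun_prop)
      rw [l2, variance_fun_id_gaussianReal] at this
      rw [show (fun z : ℝ × ℝ => z.2) = (fun x : ℝ => x) ∘ (fun z : ℝ × ℝ => z.2) from rfl, ← this]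
      simp
    rw [v1, v2] at e
    have e0 : (1/2:ℝ) + 0 - (0 + 1/2) = 0 := by norm_num
    exact e.trans e0
  have i := g'.indepFun_of_covariance_eq_zero c
  have d1 : P.map (fun z => z.1 - z.2) = gaussianReal (a - b) 1 := by
    have l2' : P.map (fun z => -z.2) = gaussianReal (-b) (1/2) := by
      rw [← gaussianReal_map_neg, ← l2, Measure.map_map (by fun_prop) (by fun_prop)]
      rfl
    have i1 : IndepFun (fun z : ℝ × ℝ => z.1) (fun z : ℝ × ℝ => -z.2) P :=
      i0.comp (φ := fun x => x) (ψ := fun x => -x) (by fun_prop) (by fun_prop)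
    have := gaussianReal_add_gaussianReal_of_indepFun i1 l1 l2'
    rw [show (1/2 : NNReal) + 1/2 = 1 by norm_num, ← sub_eq_add_neg] at this
    exact this
  have d2 : P.map (fun z => z.1 + z.2) = gaussianReal (a + b) 1 := by
    have := gaussianReal_add_gaussianReal_of_indepFun i0 l1 l2
    rw [show (1/2 : NNReal) + 1/2 = 1 by norm_num] at this
    exact this
  rw [(indepFun_iff_map_prod_eq_prod_map_map (by fun_prop) (by fun_prop)).1 i, d1, d2]


noncomputable def HH (W : ℝ) (z : ℝ × ℝ) : ℝ := hfun W (z.1 - z.2) * hfun W (z.1 + z.2)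

lemma HH_meas (W : ℝ) : Measurable (HH W) := by
  unfold HH
  have := hfun_meas W
  fun_prop

lemma HH_abs (W : ℝ) : HH W ∘ (Prod.map (fun w => |w|) (fun w => |w|)) = HH W := by
  ext ⟨x, y⟩
  simp only [Function.comp, Prod.map, HH]
  rcases abs_choice x with h | h <;> rcases abs_choice y with h' | h' <;> rw [h, h']
  · rw [sub_neg_eq_add, ← sub_eq_add_neg, mul_comm]
  · rw [show -x - y = -(x + y) by ring, show -x + y = -(x - y) by ring, hfun_neg, hfun_neg, mul_comm]
  · rw [show -x - -y = -(x - y) by ring, show -x + -y = -(x + y) by ring, hfun_neg, hfun_neg]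

lemma HH_law (W a b : ℝ) (l m : NNReal) (hl : (l : ℝ) = a ^ 2) (hm : (m : ℝ) = b ^ 2) :
    (kap2 ∘ₘ ((poissonMeasure l).prod (poissonMeasure m))).map (HH W) =
    ((gaussianReal (a - b) 1).prod (gaussianReal (a + b) 1)).map (fun z => hfun W z.1 * hfun W z.2) := by
  have hh := hfun_meas W
  have hH := HH_meas W
  rw [← HH_abs W, ← Measure.map_map (HH_meas W) (by fun_prop), kap2_map a b l m hl hm,
    Measure.map_map (HH_meas W) (by fun_prop), HH_abs, ← rot_map, Measure.map_map (by fun_prop) (by fun_prop)]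
  rfl

noncomputable def BB (W : ℝ) : ℝ := JJ⁻¹ * (W * Real.exp (W ^ 2 / 2) / 2 + 2 / W)

lemma sq_err_1d (u : ℝ) {W : ℝ} (hW : 0 < W) :
    ∫⁻ x, ENNReal.ofReal ((hfun W x - |u|) ^ 2) ∂gaussianReal u 1 ≤ ENNReal.ofReal (2 + 2 * BB W ^ 2) := by
  have hv : ∫ x, (x - u) ^ 2 ∂gaussianReal u 1 = 1 := by
    have h := variance_fun_id_gaussianReal (μ := u) (v := 1)
    rw [variance_eq_integral (by fun_prop), integral_id_gaussianReal] at h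
    simpa using h
  have hi : Integrable (fun x => (x - u) ^ 2) (gaussianReal u 1) := by
    have : MemLp (fun x : ℝ => x - u) 2 (gaussianReal u 1) :=
      (memLp_id_gaussianReal' 2 (by simp)).sub (memLp_const u)
    exact this.integrable_sq
  calc _ ≤ ∫⁻ x, ENNReal.ofReal (2 * (x - u) ^ 2 + 2 * BB W ^ 2) ∂gaussianReal u 1 := by
        apply lintegral_mono
        intro x
        apply ENNReal.ofReal_le_ofReal
        have h1 := hfun_bound x hW
        have h2 := abs_abs_sub_abs_le_abs_sub x u
        have h3 : |(hfun W x - |u|)| ≤ |x - u| + BB W := by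
          calc |(hfun W x - |u|)| = |(hfun W x - |x|) + (|x| - |u|)| := by ring_nf
            _ ≤ _ := abs_add_le _ _
            _ ≤ _ := by unfold BB; linarith
        rw [← sq_abs, ← sq_abs (x - u)]
        nlinarith [sq_nonneg (|x - u| - BB W), abs_nonneg (hfun W x - |u|)]
    _ = ENNReal.ofReal (∫ x, (2 * (x - u) ^ 2 + 2 * BB W ^ 2) ∂gaussianReal u 1) := by
        rw [ofReal_integral_eq_lintegral_ofReal]
        · exact (hi.const_mul 2).add (integrable_const _)
        · exact Filter.Eventually.of_forall fun x => by positivity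
    _ = _ := by
        rw [integral_add (hi.const_mul 2) (integrable_const _), integral_const_mul, hv]
        simp

lemma sq_err_2d (u v : ℝ) {W : ℝ} (hW : 0 < W) :
    ∫⁻ z, ENNReal.ofReal ((hfun W z.1 * hfun W z.2 - |u| * |v|) ^ 2)
      ∂((gaussianReal u 1).prod (gaussianReal v 1)) ≤
    ENNReal.ofReal (3 * ((2 + 2 * BB W ^ 2) ^ 2 + (u ^ 2 + v ^ 2) * (2 + 2 * BB W ^ 2))) := by
  have hm := hfun_meas W
  set D := 2 + 2 * BB W ^ 2 with hD
  have hD0 : 0 ≤ D := by positivity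
  have h1 := sq_err_1d u hW
  have h2 := sq_err_1d v hW
  set e1 : ℝ → ℝ≥0∞ := fun x => ENNReal.ofReal ((hfun W x - |u|) ^ 2) with he1
  set e2 : ℝ → ℝ≥0∞ := fun x => ENNReal.ofReal ((hfun W x - |v|) ^ 2) with he2
  have m1 : Measurable e1 := by fun_prop
  have m2 : Measurable e2 := by fun_prop
  have hf : ∫⁻ z, e1 z.1 ∂((gaussianReal u 1).prod (gaussianReal v 1)) ≤ ENNReal.ofReal D := by
    rw [lintegral_prod _ (by fun_prop)]
    simpa using h1
  have hs : ∫⁻ z, e2 z.2 ∂((gaussianReal u 1).prod (gaussianReal v 1)) ≤ ENNReal.ofReal D := by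
    rw [lintegral_prod _ (by fun_prop)]
    simpa using h2
  have hp : ∫⁻ z, e1 z.1 * e2 z.2 ∂((gaussianReal u 1).prod (gaussianReal v 1)) ≤ ENNReal.ofReal D * ENNReal.ofReal D := by
    rw [lintegral_prod_mul m1.aemeasurable m2.aemeasurable]
    gcongr
  calc _ ≤ ∫⁻ z, (ENNReal.ofReal 3 * (e1 z.1 * e2 z.2) + ENNReal.ofReal (3 * u ^ 2) * e2 z.2 + ENNReal.ofReal (3 * v ^ 2) * e1 z.1)
        ∂((gaussianReal u 1).prod (gaussianReal v 1)) := by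
        apply lintegral_mono
        intro z
        simp only [he1, he2]
        rw [← ENNReal.ofReal_mul (by positivity), ← ENNReal.ofReal_mul (by positivity), ← ENNReal.ofReal_mul (by positivity),
          ← ENNReal.ofReal_mul (by positivity), ← ENNReal.ofReal_add (by positivity) (by positivity),
          ← ENNReal.ofReal_add (by positivity) (by positivity)]
        apply ENNReal.ofReal_le_ofReal
        rw [← sq_abs u, ← sq_abs v]
        set p := hfun W z.1 - |u|
        set q := hfun W z.2 - |v|
        have : hfun W z.1 * hfun W z.2 - |u| * |v| = p * q + |u| * q + |v| * p := by
          simp only [p, q]; ring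
        rw [this]
        nlinarith [sq_nonneg (p * q - |u| * q), sq_nonneg (p * q - |v| * p), sq_nonneg (|u| * q - |v| * p)]
    _ = ENNReal.ofReal 3 * (∫⁻ z, e1 z.1 * e2 z.2 ∂((gaussianReal u 1).prod (gaussianReal v 1)))
        + ENNReal.ofReal (3 * u ^ 2) * (∫⁻ z, e2 z.2 ∂((gaussianReal u 1).prod (gaussianReal v 1)))
        + ENNReal.ofReal (3 * v ^ 2) * (∫⁻ z, e1 z.1 ∂((gaussianReal u 1).prod (gaussianReal v 1))) := by
        rw [lintegral_add_left (by fun_prop), lintegral_add_left (by fun_prop), lintegral_const_mul _ (by fun_prop),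
          lintegral_const_mul _ (by fun_prop), lintegral_const_mul _ (by fun_prop)]
    _ ≤ ENNReal.ofReal 3 * (ENNReal.ofReal D * ENNReal.ofReal D) + ENNReal.ofReal (3 * u ^ 2) * ENNReal.ofReal D
        + ENNReal.ofReal (3 * v ^ 2) * ENNReal.ofReal D := by gcongr
    _ = _ := by
        rw [← ENNReal.ofReal_mul (by positivity), ← ENNReal.ofReal_mul (by positivity), ← ENNReal.ofReal_mul (by positivity),
          ← ENNReal.ofReal_mul (by positivity), ← ENNReal.ofReal_add (by positivity) (by positivity),
          ← ENNReal.ofReal_add (by positivity) (by positivity)]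
        congr 1
        ring

lemma memLp_of_sq {α : Type*} [MeasurableSpace α] {μ : Measure α} [IsProbabilityMeasure μ] {g : α → ℝ}
    (hg : Measurable g) (c : ℝ) (h : ∫⁻ x, ENNReal.ofReal ((g x - c) ^ 2) ∂μ < ∞) : MemLp g 2 μ := by
  have h1 : MemLp (fun x => g x - c) 2 μ := by
    rw [memLp_two_iff_integrable_sq (by fun_prop)]
    refine ⟨by fun_prop, ?_⟩
    rw [hasFiniteIntegral_iff_ofReal (Filter.Eventually.of_forall fun x => by positivity)]
    exact h
  have := h1.add (memLp_const c)
  refine this.ae_eq (Filter.Eventually.of_forall fun x => ?_)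
  simp

lemma jensen_sq {α : Type*} [MeasurableSpace α] {μ : Measure α} [IsProbabilityMeasure μ] {g : α → ℝ}
    (hg : Measurable g) (c : ℝ) :
    ENNReal.ofReal ((∫ x, g x ∂μ - c) ^ 2) ≤ ∫⁻ x, ENNReal.ofReal ((g x - c) ^ 2) ∂μ := by
  by_cases h : ∫⁻ x, ENNReal.ofReal ((g x - c) ^ 2) ∂μ < ∞
  · have hm := memLp_of_sq hg c h
    have h1 : MemLp (fun x => g x - c) 2 μ := hm.sub (memLp_const c)
    rw [← ofReal_integral_eq_lintegral_ofReal h1.integrable_sq (Filter.Eventually.of_forall fun x => by positivity)]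
    apply ENNReal.ofReal_le_ofReal
    have := variance_nonneg (fun x => g x - c) μ
    rw [variance_eq_sub h1] at this
    rw [integral_sub (hm.integrable (by norm_num)) (integrable_const c)] at this
    simp only [integral_const, probReal_univ, one_smul, Pi.pow_apply] at this
    linarith
  · rw [not_lt, top_le_iff] at h
    rw [h]; exact le_top

noncomputable def ff (W : ℝ) (xy : ℕ × ℕ) : ℝ := ∫ z, HH W z ∂kap2 xy

instance : IsMarkovKernel kap2 := by unfold kap2; infer_instance

lemma ff_sq (W a b : ℝ) (hW : 0 < W) (l m : NNReal) (hl : (l : ℝ) = a ^ 2) (hm : (m : ℝ) = b ^ 2) :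
    ∫⁻ xy, ENNReal.ofReal ((ff W xy - |a - b| * |a + b|) ^ 2) ∂((poissonMeasure l).prod (poissonMeasure m)) ≤
    ENNReal.ofReal (3 * ((2 + 2 * BB W ^ 2) ^ 2 + (2 * (a ^ 2 + b ^ 2)) * (2 + 2 * BB W ^ 2))) := by
  have hh := hfun_meas W
  have hH := HH_meas W
  calc _ ≤ ∫⁻ xy, ∫⁻ z, ENNReal.ofReal ((HH W z - |a - b| * |a + b|) ^ 2) ∂kap2 xy ∂((poissonMeasure l).prod (poissonMeasure m)) := by
        apply lintegral_mono
        intro xy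
        exact jensen_sq hH _
    _ = ∫⁻ z, ENNReal.ofReal ((HH W z - |a - b| * |a + b|) ^ 2) ∂(kap2 ∘ₘ ((poissonMeasure l).prod (poissonMeasure m))) := by
        rw [Measure.lintegral_bind kap2.aemeasurable (by fun_prop)]
    _ = ∫⁻ t, ENNReal.ofReal ((t - |a - b| * |a + b|) ^ 2) ∂((kap2 ∘ₘ ((poissonMeasure l).prod (poissonMeasure m))).map (HH W)) := by
        rw [lintegral_map (by fun_prop) hH]
    _ = ∫⁻ z, ENNReal.ofReal ((hfun W z.1 * hfun W z.2 - |a - b| * |a + b|) ^ 2)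
      ∂((gaussianReal (a - b) 1).prod (gaussianReal (a + b) 1)) := by
        rw [HH_law W a b l m hl hm, lintegral_map (by fun_prop) (by fun_prop)]
    _ ≤ _ := sq_err_2d (a - b) (a + b) hW
    _ = _ := by congr 1; ring

lemma ff_memLp (W a b : ℝ) (hW : 0 < W) (l m : NNReal) (hl : (l : ℝ) = a ^ 2) (hm : (m : ℝ) = b ^ 2) :
    MemLp (ff W) 2 ((poissonMeasure l).prod (poissonMeasure m)) :=
  memLp_of_sq (measurable_of_countable _) (|a - b| * |a + b|)
    ((ff_sq W a b hW l m hl hm).trans_lt ENNReal.ofReal_lt_top)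

lemma ff_mean (W a b : ℝ) (hW : 0 < W) (l m : NNReal) (hl : (l : ℝ) = a ^ 2) (hm : (m : ℝ) = b ^ 2) :
    ∫ xy, ff W xy ∂((poissonMeasure l).prod (poissonMeasure m)) = Phi W (a - b) * Phi W (a + b) := by
  have hh := hfun_meas W
  have hH := HH_meas W
  have hHint : Integrable (HH W) (kap2 ∘ₘ ((poissonMeasure l).prod (poissonMeasure m))) := by
    have h2 : MemLp (fun t : ℝ => t) 2 ((kap2 ∘ₘ ((poissonMeasure l).prod (poissonMeasure m))).map (HH W)) := by
      have : IsProbabilityMeasure ((kap2 ∘ₘ ((poissonMeasure l).prod (poissonMeasure m))).map (HH W)) :=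
        Measure.isProbabilityMeasure_map hH.aemeasurable
      apply memLp_of_sq measurable_id (|a - b| * |a + b|)
      rw [HH_law W a b l m hl hm, lintegral_map (by fun_prop) (by fun_prop)]
      exact (sq_err_2d (a - b) (a + b) hW).trans_lt ENNReal.ofReal_lt_top
    have := (memLp_map_measure_iff (by fun_prop) (by fun_prop)).1 h2
    exact this.integrable (by norm_num)
  have e1 : ∫ xy, ff W xy ∂((poissonMeasure l).prod (poissonMeasure m)) =
      ∫ z, HH W z ∂(kap2 ∘ₘ ((poissonMeasure l).prod (poissonMeasure m))) := by
    rw [Measure.comp_eq_comp_const_apply] at hHint ⊢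
    rw [Kernel.integral_comp hHint]
    rfl
  have e2 : ∫ z, HH W z ∂(kap2 ∘ₘ ((poissonMeasure l).prod (poissonMeasure m))) =
      ∫ t, t ∂((kap2 ∘ₘ ((poissonMeasure l).prod (poissonMeasure m))).map (HH W)) := by
    rw [integral_map (by fun_prop) (by fun_prop)]
  rw [e1, e2, HH_law W a b l m hl hm, integral_map (by fun_prop) (by fun_prop), integral_prod_mul, hfun_mean, hfun_mean]



lemma pi_sq {S : ℕ} {Ω : Type*} [MeasurableSpace Ω] (μ : Fin S → Measure Ω) [∀ i, IsProbabilityMeasure (μ i)]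
    (g : Ω → ℝ) (hg : ∀ i, MemLp g 2 (μ i)) (t : ℝ) (c v b : Fin S → ℝ)
    (hv : ∀ i, ∫⁻ x, ENNReal.ofReal ((g x - c i) ^ 2) ∂μ i ≤ ENNReal.ofReal (v i)) (hv0 : ∀ i, 0 ≤ v i)
    (hb : ∀ i, |∫ x, g x ∂μ i - c i| ≤ b i) :
    ∫⁻ z, ENNReal.ofReal ((t * ∑ i, g (z i) - t * ∑ i, c i) ^ 2) ∂Measure.pi μ ≤
      ENNReal.ofReal (t ^ 2 * (∑ i, v i + (∑ i, b i) ^ 2)) := by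
  have hgi : ∀ i, MemLp (fun z : Fin S → Ω => g (z i)) 2 (Measure.pi μ) := fun i =>
    (hg i).comp_measurePreserving (measurePreserving_eval μ i)
  have hT : MemLp (fun z : Fin S → Ω => ∑ i, g (z i)) 2 (Measure.pi μ) := memLp_finsetSum _ fun i _ => hgi i
  have hmean : ∫ z, ∑ i, g (z i) ∂Measure.pi μ = ∑ i, ∫ x, g x ∂μ i := by
    rw [integral_finsetSum _ fun i _ => (hgi i).integrable (by norm_num)]
    refine Finset.sum_congr rfl fun i _ => ?_
    have h := (measurePreserving_eval μ i)
    rw [← h.map_eq] 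
    rw [integral_map h.measurable.aemeasurable]
    rw [h.map_eq]; exact (hg i).aestronglyMeasurable
  have hvar : Var[fun z : Fin S → Ω => ∑ i, g (z i); Measure.pi μ] = ∑ i, Var[g; μ i] := by
    have := variance_sum_pi (μ := μ) (X := fun _ => g) hg
    rw [← this]
    congr 1
    ext z; simp
  have hvi : ∀ i, Var[g; μ i] ≤ v i := by
    intro i
    have h1 : MemLp (fun x => g x - c i) 2 (μ i) := (hg i).sub (memLp_const _)
    have h2 := hv i
    rw [← ofReal_integral_eq_lintegral_ofReal h1.integrable_sq (Filter.Eventually.of_forall fun x => by positivity),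
      ENNReal.ofReal_le_ofReal_iff (hv0 i)] at h2
    have h3 := variance_sub_const (hg i).aestronglyMeasurable (c i)
    rw [← h3]
    exact (variance_le_expectation_sq h1.aestronglyMeasurable).trans h2
  have h1 : MemLp (fun z : Fin S → Ω => t * ∑ i, g (z i) - t * ∑ i, c i) 2 (Measure.pi μ) :=
    (hT.const_mul t).sub (memLp_const _)
  rw [← ofReal_integral_eq_lintegral_ofReal h1.integrable_sq (Filter.Eventually.of_forall fun x => by positivity)]
  apply ENNReal.ofReal_le_ofReal
  have e := variance_eq_sub h1
  rw [variance_sub_const (hT.const_mul t).aestronglyMeasurable, variance_const_mul, hvar,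
    integral_sub ((hT.const_mul t).integrable (by norm_num)) (integrable_const _), integral_const_mul, hmean] at e
  simp only [integral_const, probReal_univ, one_smul, Pi.pow_apply] at e
  have hbb : (∑ i, ∫ x, g x ∂μ i - ∑ i, c i) ^ 2 ≤ (∑ i, b i) ^ 2 := by
    rw [← Finset.sum_sub_distrib, ← sq_abs]
    gcongr
    exact (Finset.abs_sum_le_sum_abs _ _).trans (Finset.sum_le_sum fun i _ => hb i)
  have hvv : ∑ i, Var[g; μ i] ≤ ∑ i, v i := Finset.sum_le_sum fun i _ => hvi i
  have ht := sq_nonneg t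
  have k1 := mul_le_mul_of_nonneg_left hbb ht
  have k2 := mul_le_mul_of_nonneg_left hvv ht
  nlinarith

lemma risk2_eq {S : ℕ} (n : ℕ) (p q : Fin S → ℝ) (L : ℝ) (est : (Fin S → ℕ) × (Fin S → ℕ) → ℝ)
    (l m : Fin S → NNReal) (hl : ∀ i, (l i : ℝ) = n * p i) (hm : ∀ i, (m i : ℝ) = n * q i) :
    risk2 n p q L est = ∫⁻ z, ENNReal.ofReal ((est (fun i => (z i).1, fun i => (z i).2) - L) ^ 2)
      ∂Measure.pi (fun i => (poissonMeasure (l i)).prod (poissonMeasure (m i))) := by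
  rw [lintegral_countable']
  unfold risk2
  rw [← (Equiv.arrowProdEquivProdArrow (Fin S) (fun _ => ℕ) (fun _ => ℕ)).tsum_eq]
  refine tsum_congr fun z => ?_
  have hs : ({z} : Set (Fin S → ℕ × ℕ)) = Set.univ.pi (fun i => {z i}) := by
    rw [Set.univ_pi_singleton]
  rw [Measure.pi_singleton]
  have hp : ∀ i, ((poissonMeasure (l i)).prod (poissonMeasure (m i))) {z i} =
      ENNReal.ofReal (_root_.poissonPMF (n * p i) (z i).1 * _root_.poissonPMF (n * q i) (z i).2) := by
    intro i
    rw [show ({z i} : Set (ℕ × ℕ)) = {(z i).1} ×ˢ {(z i).2} by simp, Measure.prod_prod,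
      poissonMeasure_singleton, poissonMeasure_singleton, ← ENNReal.ofReal_mul (by positivity)]
    simp only [_root_.poissonPMF, hl, hm]
  simp only [hp]
  have hn : ∀ i, 0 ≤ _root_.poissonPMF (n * p i) (z i).1 * _root_.poissonPMF (n * q i) (z i).2 := by
    intro i
    rw [← hl, ← hm]
    unfold _root_.poissonPMF
    positivity
  rw [← ENNReal.ofReal_prod_of_nonneg (fun i _ => hn i), Finset.prod_mul_distrib, mul_comm, mul_comm (ENNReal.ofReal _)]
  rw [mul_comm (ENNReal.ofReal _), ENNReal.ofReal_mul (sq_nonneg _)]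
  rfl

lemma risk2_zero {S : ℕ} (n : ℕ) (p q : Fin S → ℝ) (hp : IsDist p) (hq : IsDist q) :
    risk2 n p q (L1dist p q) (fun _ => 0) ≤ ENNReal.ofReal 4 := by
  obtain ⟨l, hl⟩ : ∃ l : Fin S → NNReal, ∀ i, (l i : ℝ) = n * p i :=
    ⟨fun i => ⟨n * p i, mul_nonneg (by positivity) (hp.1 i)⟩, fun _ => rfl⟩
  obtain ⟨m, hm⟩ : ∃ l : Fin S → NNReal, ∀ i, (l i : ℝ) = n * q i :=
    ⟨fun i => ⟨n * q i, mul_nonneg (by positivity) (hq.1 i)⟩, fun _ => rfl⟩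
  rw [risk2_eq n p q _ _ l m hl hm]
  simp only [lintegral_const, measure_univ, mul_one]
  apply ENNReal.ofReal_le_ofReal
  have h0 : 0 ≤ L1dist p q := Finset.sum_nonneg fun i _ => abs_nonneg _
  have h2 : L1dist p q ≤ 2 := by
    unfold L1dist
    calc _ ≤ ∑ i, (p i + q i) := Finset.sum_le_sum fun i _ => by
            have := hp.1 i; have := hq.1 i; rw [abs_le]; constructor <;> linarith
      _ = 2 := by rw [Finset.sum_add_distrib, hp.2, hq.2]; norm_num
  nlinarith

lemma bias_bound (W a b : ℝ) (hW : 0 < W) :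
    |(Phi W (a - b) * Phi W (a + b) - |a - b| * |a + b|)| ≤
      2 * JJ⁻¹ / W * (2 * √ (2 * (a ^ 2 + b ^ 2))) + (2 * JJ⁻¹ / W) ^ 2 := by
  have h1 := Phi_bound (a - b) hW
  have h2 := Phi_bound (a + b) hW
  have hJ := JJ_pos
  set D := 2 * JJ⁻¹ / W
  have hD : 0 ≤ D := by positivity
  have k1 : |a - b| ≤ √ (2 * (a ^ 2 + b ^ 2)) := Real.abs_le_sqrt (by nlinarith [sq_nonneg (a + b)])
  have k2 : |a + b| ≤ √ (2 * (a ^ 2 + b ^ 2)) := Real.abs_le_sqrt (by nlinarith [sq_nonneg (a - b)])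
  set R := √ (2 * (a ^ 2 + b ^ 2))
  set u := |a - b|
  set v := |a + b|
  have hu : 0 ≤ u := abs_nonneg _
  have hv : 0 ≤ v := abs_nonneg _
  set x := Phi W (a - b)
  set y := Phi W (a + b)
  calc |x * y - u * v| = |(x - u) * (y - v) + u * (y - v) + v * (x - u)| := by ring_nf
    _ ≤ |(x - u) * (y - v) + u * (y - v)| + |v * (x - u)| := abs_add_le _ _
    _ ≤ |(x - u) * (y - v)| + |u * (y - v)| + |v * (x - u)| := by gcongr; exact abs_add_le _ _
    _ = |x - u| * |y - v| + u * |y - v| + v * |x - u| := by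
        rw [abs_mul, abs_mul, abs_mul, abs_of_nonneg hu, abs_of_nonneg hv]
    _ ≤ D * D + R * D + R * D := by gcongr
    _ = _ := by ring

/-- The estimator. -/
noncomputable def myest (S n : ℕ) (W : ℝ) (xy : (Fin S → ℕ) × (Fin S → ℕ)) : ℝ :=
  (n : ℝ)⁻¹ * ∑ i, ff W (xy.1 i, xy.2 i)

lemma myest_risk {S n : ℕ} (hn : 0 < n) (W : ℝ) (hW : 0 < W) (p q : Fin S → ℝ) (hp : IsDist p) (hq : IsDist q) :
    risk2 n p q (L1dist p q) (myest S n W) ≤ ENNReal.ofReal ((n : ℝ)⁻¹ ^ 2 *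
      (3 * (S * (2 + 2 * BB W ^ 2) ^ 2 + 4 * n * (2 + 2 * BB W ^ 2))
       + (2 * JJ⁻¹ / W * (2 * √ (4 * n * S)) + S * (2 * JJ⁻¹ / W) ^ 2) ^ 2)) := by
  have hn' : (0 : ℝ) < n := by exact_mod_cast hn
  have hp0 := hp.1
  have hq0 := hq.1
  rw [risk2_eq n p q _ _ (fun i => ⟨n * p i, mul_nonneg (by positivity) (hp.1 i)⟩)
    (fun i => ⟨n * q i, mul_nonneg (by positivity) (hq.1 i)⟩) (fun _ => rfl) (fun _ => rfl)]
  set l : Fin S → NNReal := fun i => ⟨n * p i, mul_nonneg (by positivity) (hp.1 i)⟩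
  set m : Fin S → NNReal := fun i => ⟨n * q i, mul_nonneg (by positivity) (hq.1 i)⟩
  set a : Fin S → ℝ := fun i => √ (n * p i)
  set b : Fin S → ℝ := fun i => √ (n * q i)
  have ha : ∀ i, a i ^ 2 = n * p i := fun i => Real.sq_sqrt (mul_nonneg (by positivity) (hp.1 i))
  have hb : ∀ i, b i ^ 2 = n * q i := fun i => Real.sq_sqrt (mul_nonneg (by positivity) (hq.1 i))
  have hla : ∀ i, (l i : ℝ) = a i ^ 2 := fun i => (ha i).symm
  have hmb : ∀ i, (m i : ℝ) = b i ^ 2 := fun i => (hb i).symm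
  have hL : L1dist p q = (n : ℝ)⁻¹ * ∑ i, |a i - b i| * |a i + b i| := by
    unfold L1dist
    rw [Finset.mul_sum]
    refine Finset.sum_congr rfl fun i _ => ?_
    rw [← abs_mul, show (a i - b i) * (a i + b i) = n * (p i - q i) by linarith [ha i, hb i, (by ring : (a i - b i) * (a i + b i) = a i ^ 2 - b i ^ 2)],
      abs_mul, abs_of_pos hn']
    field_simp
  have key := pi_sq (fun i => (poissonMeasure (l i)).prod (poissonMeasure (m i))) (ff W)
    (fun i => ff_memLp W (a i) (b i) hW (l i) (m i) (hla i) (hmb i)) (n : ℝ)⁻¹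
    (fun i => |a i - b i| * |a i + b i|)
    (fun i => 3 * ((2 + 2 * BB W ^ 2) ^ 2 + (2 * (a i ^ 2 + b i ^ 2)) * (2 + 2 * BB W ^ 2)))
    (fun i => 2 * JJ⁻¹ / W * (2 * √ (2 * (a i ^ 2 + b i ^ 2))) + (2 * JJ⁻¹ / W) ^ 2)
    (fun i => ff_sq W (a i) (b i) hW (l i) (m i) (hla i) (hmb i)) (fun i => by positivity)
    (fun i => by rw [ff_mean W (a i) (b i) hW (l i) (m i) (hla i) (hmb i)]; exact bias_bound W _ _ hW)
  have hsum : ∑ i, (a i ^ 2 + b i ^ 2) = 2 * n := by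
    simp only [ha, hb]
    rw [Finset.sum_add_distrib, ← Finset.mul_sum, ← Finset.mul_sum, hp.2, hq.2]; ring
  rw [hL]
  refine key.trans (ENNReal.ofReal_le_ofReal ?_)
  gcongr ?_ * (?_ + ?_ ^ 2)
  · rw [← Finset.mul_sum, Finset.sum_add_distrib, ← Finset.sum_mul, ← Finset.mul_sum, hsum]
    simp
    apply le_of_eq; ring
  · apply Finset.sum_nonneg; intro i _; have := JJ_pos; positivity
  · rw [Finset.sum_add_distrib, ← Finset.mul_sum, ← Finset.mul_sum]
    have hcs : ∑ i, √ (2 * (a i ^ 2 + b i ^ 2)) ≤ √ (4 * n * S) := by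
      apply Real.le_sqrt_of_sq_le
      have := sq_sum_le_card_mul_sum_sq (s := Finset.univ) (f := fun i => √ (2 * (a i ^ 2 + b i ^ 2)))
      refine this.trans ?_
      have : ∀ i, √ (2 * (a i ^ 2 + b i ^ 2)) ^ 2 = 2 * (a i ^ 2 + b i ^ 2) := fun i => Real.sq_sqrt (by positivity)
      simp only [this]
      rw [← Finset.mul_sum, hsum]
      simp
      apply le_of_eq; ring
    have := JJ_pos
    have h3 : ∑ i : Fin S, (2 * JJ⁻¹ / W) ^ 2 = S * (2 * JJ⁻¹ / W) ^ 2 := by simp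
    rw [h3]
    gcongr


lemma BB_bound {W : ℝ} (hW : 1 ≤ W) : 2 + 2 * BB W ^ 2 ≤ (2 + 18 * JJ⁻¹ ^ 2) * Real.exp (W ^ 2) ^ 2 := by
  have hJ := JJ_pos
  have hE : Real.exp (W ^ 2) = Real.exp (W ^ 2 / 2) * Real.exp (W ^ 2 / 2) := by
    rw [← Real.exp_add]; ring_nf
  have h1 : W ≤ Real.exp (W ^ 2 / 2) := by nlinarith [Real.add_one_le_exp (W ^ 2 / 2), sq_nonneg (W - 1)]
  have h2 : 2 / W ≤ 2 := by rw [div_le_iff₀ (by linarith)]; linarith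
  have h3 : 1 ≤ Real.exp (W ^ 2) := Real.one_le_exp (by positivity)
  have h4 : W * Real.exp (W ^ 2 / 2) ≤ Real.exp (W ^ 2) := by rw [hE]; gcongr
  have h5 : BB W ≤ JJ⁻¹ * (3 * Real.exp (W ^ 2)) := by
    unfold BB
    gcongr
    linarith
  have h6 : 0 ≤ BB W := by unfold BB; positivity
  have h7 : BB W ^ 2 ≤ (JJ⁻¹ * (3 * Real.exp (W ^ 2))) ^ 2 := by gcongr
  nlinarith

set_option maxHeartbeats 1000000 in
lemma final_bound (A K : ℝ) (hA : 1 ≤ A) (hK : 0 < K) (s n Λ W E B : ℝ) (hs : 2 ≤ s) (hn : 0 < n) (hΛ : 0 < Λ)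
    (hW : 1 ≤ W) (hW2 : W ^ 2 = Λ / (8 * A)) (hE : 1 ≤ E) (hEn : E ^ 4 * Λ ≤ 2 * A * n) (hEs : E ^ 4 * Λ ≤ 2 * A * s)
    (hB0 : 0 ≤ B) (hB : B ≤ (2 + 18 * K ^ 2) * E ^ 2) (hS : s ≤ n * Λ) :
    n⁻¹ ^ 2 * (3 * (s * B ^ 2 + 4 * n * B) + (2 * K / W * (2 * √ (4 * n * s)) + s * (2 * K / W) ^ 2) ^ 2) ≤
    (48 * A * (2 + 18 * K ^ 2) ^ 2 + 32 * (32 * A * K ^ 2) + 2 * (32 * A * K ^ 2) ^ 2 + 4) * s / (n * Λ) := by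
  set M := 2 + 18 * K ^ 2 with hM
  have hM1 : 1 ≤ M := by nlinarith [sq_nonneg K]
  set G := 32 * A * K ^ 2 with hG
  have hG0 : 0 ≤ G := by positivity
  have hD2 : (2 * K / W) ^ 2 = G / Λ := by
    rw [div_pow, hW2, hG]; field_simp; ring
  set D := 2 * K / W
  have hq : √ (4 * n * s) ^ 2 = 4 * n * s := Real.sq_sqrt (by positivity)
  set r := √ (4 * n * s)
  have hbias : (D * (2 * r) + s * D ^ 2) ^ 2 ≤ 32 * (G / Λ) * n * s + 2 * (s ^ 2 * (G / Λ) ^ 2) := by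
    have : (D * (2 * r) + s * D ^ 2) ^ 2 ≤ 2 * (4 * D ^ 2 * r ^ 2 + (s * D ^ 2) ^ 2) := by
      nlinarith [sq_nonneg (D * (2 * r) - s * D ^ 2)]
    rw [hq, hD2] at this
    rw [hD2]
    nlinarith
  have hE2 : 1 ≤ E ^ 2 := one_le_pow₀ hE
  have hB2 : B ^ 2 ≤ M ^ 2 * E ^ 4 := by
    calc B ^ 2 ≤ (M * E ^ 2) ^ 2 := by gcongr
      _ = _ := by ring
  have hB1 : B ≤ M ^ 2 * E ^ 4 := by
    have : 1 ≤ M * E ^ 2 := by nlinarith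
    nlinarith
  have hvar : 3 * (s * B ^ 2 + 4 * n * B) ≤ 48 * A * M ^ 2 * s * n / Λ := by
    have k1 : 3 * (s * B ^ 2 + 4 * n * B) ≤ 12 * M ^ 2 * (s * E ^ 4 + n * E ^ 4) := by
      have a1 := mul_le_mul_of_nonneg_left hB2 (by linarith : 0 ≤ s)
      have a2 := mul_le_mul_of_nonneg_left hB1 hn.le
      have a3 : 0 ≤ s * (M ^ 2 * E ^ 4) := by positivity
      nlinarith
    refine k1.trans ?_
    rw [le_div_iff₀ hΛ]
    have b1 := mul_le_mul_of_nonneg_left hEn (by linarith : 0 ≤ s)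
    have b2 := mul_le_mul_of_nonneg_left hEs hn.le
    have b3 : s * E ^ 4 * Λ + n * E ^ 4 * Λ ≤ 4 * A * s * n := by nlinarith
    have b4 := mul_le_mul_of_nonneg_left b3 (by positivity : 0 ≤ 12 * M ^ 2)
    nlinarith
  have hx : s / (n * Λ) ≤ 1 := by rw [div_le_one (by positivity)]; exact hS
  have hx0 : 0 ≤ s / (n * Λ) := by positivity
  calc _ ≤ n⁻¹ ^ 2 * (48 * A * M ^ 2 * s * n / Λ + (32 * (G / Λ) * n * s + 2 * (s ^ 2 * (G / Λ) ^ 2))) := by gcongr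
    _ = 48 * A * M ^ 2 * (s / (n * Λ)) + 32 * G * (s / (n * Λ)) + 2 * G ^ 2 * ((s / (n * Λ)) * (s / (n * Λ))) := by
        field_simp
        ring
    _ ≤ 48 * A * M ^ 2 * (s / (n * Λ)) + 32 * G * (s / (n * Λ)) + 2 * G ^ 2 * ((s / (n * Λ)) * 1) + 4 * (s / (n * Λ)) := by
        have : 2 * G ^ 2 * ((s / (n * Λ)) * (s / (n * Λ))) ≤ 2 * G ^ 2 * ((s / (n * Λ)) * 1) := by gcongr
        linarith
    _ = _ := by ring

end Helpers

/-- achievability in the unknown-`Q` case — an estimator with worst-case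
risk at most `C·S/(n ln n)` whenever `N₀ ≤ n ≤ S^A`. -/
theorem optimal_estimator_unknownQ (A : ℝ) (hA : 1 ≤ A) :
    ∃ C : ℝ, ∃ N₀ : ℕ, 0 < C ∧
      ∀ S n : ℕ, 2 ≤ S → N₀ ≤ n → (n : ℝ) ≤ (S : ℝ) ^ A →
        ∃ est : (Fin S → ℕ) × (Fin S → ℕ) → ℝ,
          ∀ p q : Fin S → ℝ, IsDist p → IsDist q →
            risk2 n p q (L1dist p q) est ≤ ENNReal.ofReal (C * S / (n * Real.log n)) := by
  have hJ := JJ_pos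
  refine ⟨48 * A * (2 + 18 * JJ⁻¹ ^ 2) ^ 2 + 32 * (32 * A * JJ⁻¹ ^ 2) + 2 * (32 * A * JJ⁻¹ ^ 2) ^ 2 + 4,
    ⌈Real.exp (8 * A)⌉₊, by positivity, ?_⟩
  intro S n hS hN hnS
  have hn1 : Real.exp (8 * A) ≤ n := Nat.ceil_le.1 hN
  have hn : (0 : ℝ) < n := (Real.exp_pos _).trans_le hn1
  have hn' : 0 < n := by exact_mod_cast hn
  have hΛ8 : 8 * A ≤ Real.log n := (Real.le_log_iff_exp_le hn).2 hn1
  have hΛ : 0 < Real.log n := by linarith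
  have hS' : (2 : ℝ) ≤ S := by exact_mod_cast hS
  by_cases hc : (S : ℝ) ≤ n * Real.log n
  · set W := √ (Real.log n / (8 * A)) with hWd
    have hW2 : W ^ 2 = Real.log n / (8 * A) := Real.sq_sqrt (by positivity)
    have hW : 1 ≤ W := by
      rw [hWd, Real.one_le_sqrt, le_div_iff₀ (by positivity)]; linarith
    refine ⟨myest S n W, fun p q hp hq => ?_⟩
    refine (myest_risk hn' W (by linarith) p q hp hq).trans (ENNReal.ofReal_le_ofReal ?_)
    have hE4 : Real.exp (W ^ 2) ^ 4 * Real.log n ≤ 2 * A * Real.exp (Real.log n / A) := by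
      have e1 : Real.exp (W ^ 2) ^ 4 = Real.exp (Real.log n / (2 * A)) := by
        rw [← Real.exp_nat_mul, hW2]; congr 1; field_simp; norm_num
      have e2 : Real.exp (Real.log n / A) = Real.exp (Real.log n / (2 * A)) * Real.exp (Real.log n / (2 * A)) := by
        rw [← Real.exp_add]; congr 1; field_simp; norm_num
      have e3 : Real.log n ≤ 2 * A * Real.exp (Real.log n / (2 * A)) := by
        have := Real.add_one_le_exp (Real.log n / (2 * A))
        calc Real.log n = 2 * A * (Real.log n / (2 * A)) := by field_simp
          _ ≤ _ := by gcongr; linarith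
      rw [e1, e2]
      have := mul_le_mul_of_nonneg_left e3 (Real.exp_pos (Real.log n / (2 * A))).le
      linarith
    have hEn : Real.exp (Real.log n / A) ≤ n := by
      calc _ ≤ Real.exp (Real.log n) := Real.exp_le_exp.2 (div_le_self hΛ.le hA)
        _ = n := Real.exp_log hn
    have hEs : Real.exp (Real.log n / A) ≤ S := by
      rw [← Real.le_log_iff_exp_le (by linarith), div_le_iff₀ (by linarith)]
      have := Real.log_le_log hn hnS
      rw [Real.log_rpow (by linarith)] at this
      linarith
    exact final_bound A JJ⁻¹ hA (by positivity) S n (Real.log n) W (Real.exp (W ^ 2)) (2 + 2 * BB W ^ 2) hS' hn hΛ hW hW2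
      (Real.one_le_exp (by positivity)) (hE4.trans (by gcongr)) (hE4.trans (by gcongr)) (by positivity) (BB_bound hW) hc
  · refine ⟨fun _ => 0, fun p q hp hq => (risk2_zero n p q hp hq).trans (ENNReal.ofReal_le_ofReal ?_)⟩
    push Not at hc
    rw [le_div_iff₀ (by positivity)]
    have : 0 ≤ (48 * A * (2 + 18 * JJ⁻¹ ^ 2) ^ 2 + 32 * (32 * A * JJ⁻¹ ^ 2) + 2 * (32 * A * JJ⁻¹ ^ 2) ^ 2) * (S : ℝ) := by positivity
    nlinarith
end

section
/- There exists a universal constant M > 0 such that for every integer K ≥ 1 the following holds. Let u and v be real bivariate polynomials of degree at most K in each variable such that sup_{(x,y)∈[0,1]²} |u(x,y) − (√x + √y)| equals the infimum of sup_{(x,y)∈[0,1]²} |P(x,y) − (√x + √y)| over all bivariate polynomials P of degree at most K in each variable, and sup_{(x,y)∈[0,1]²} |v(x,y) − |√x − √y|| equals the corresponding infimum for the function |√x − √y|. Then for all (x,y) ∈ [0,1]²: |u(x,y)·v(x,y) − u(0,0)·v(0,0) − |x − y|| ≤ M·( (√x + √y)/K + 1/K² ). -/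
open scoped BigOperators

/-- A bivariate polynomial of degree at most `K` in each variable:
an element of the span of the monomials `x^i y^j` with `0 ≤ i, j ≤ K`. -/
def IsBivarPoly (K : ℕ) (u : ℝ → ℝ → ℝ) : Prop :=
  ∃ c : Fin (K + 1) → Fin (K + 1) → ℝ, ∀ x y : ℝ,
    u x y = ∑ i : Fin (K + 1), ∑ j : Fin (K + 1), c i j * x ^ (i : ℕ) * y ^ (j : ℕ)

/-- The uniform approximation error of `w` to `f` on the unit square `[0,1]²`. -/
noncomputable def sqErr (w f : ℝ → ℝ → ℝ) : ℝ :=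
  ⨆ z : (Set.Icc (0:ℝ) 1) × (Set.Icc (0:ℝ) 1), |w (z.1 : ℝ) (z.2 : ℝ) - f (z.1 : ℝ) (z.2 : ℝ)|

namespace ProdApprox

open Finset

/-- trigonometric sum `∑_{k<n} b_k e^{ikt}` -/
noncomputable def trig (b : ℕ → ℝ) (n : ℕ) (t : ℝ) : ℂ :=
  ∑ k ∈ range n, (b k : ℂ) * Complex.exp (t * Complex.I) ^ k

/-- the nonnegative kernel -/
noncomputable def ker (b : ℕ → ℝ) (n : ℕ) (t : ℝ) : ℝ := Complex.normSq (trig b n t)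

lemma ker_eq (b : ℕ → ℝ) (n : ℕ) (t : ℝ) :
    ker b n t = ∑ k ∈ range n, ∑ l ∈ range n, b k * b l * Real.cos (((k : ℤ) - (l : ℤ) : ℤ) * t) := by
  have h1 : ∀ k : ℕ, Complex.exp (t * Complex.I) ^ k
      = Real.cos (k * t) + Real.sin (k * t) * Complex.I := by
    intro k
    rw [← Complex.exp_nat_mul, show (k : ℂ) * (t * Complex.I) = ((k * t : ℝ) : ℂ) * Complex.I by
      push_cast; ring, Complex.exp_mul_I]
    push_cast
    rfl
  have hre : (trig b n t).re = ∑ k ∈ range n, b k * Real.cos (k * t) := by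
    simp only [trig, h1, Complex.re_sum]
    refine sum_congr rfl fun k _ => ?_
    simp only [Complex.re_ofReal_mul, Complex.add_re, Complex.ofReal_re, Complex.I_re, Complex.mul_re,
      Complex.ofReal_im, Complex.I_im]
    ring
  have him : (trig b n t).im = ∑ k ∈ range n, b k * Real.sin (k * t) := by
    simp only [trig, h1, Complex.im_sum]
    refine sum_congr rfl fun k _ => ?_
    simp only [Complex.im_ofReal_mul, Complex.add_im, Complex.ofReal_re, Complex.I_re, Complex.mul_im,
      Complex.ofReal_im, Complex.I_im]
    ring
  rw [ker, Complex.normSq_apply, hre, him, sum_mul_sum, sum_mul_sum, ← sum_add_distrib]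
  refine sum_congr rfl fun k _ => ?_
  rw [← sum_add_distrib]
  refine sum_congr rfl fun l _ => ?_
  push_cast
  rw [sub_mul, Real.cos_sub]
  ring

lemma ker_nonneg (b : ℕ → ℝ) (n : ℕ) (t : ℝ) : 0 ≤ ker b n t := Complex.normSq_nonneg _

lemma ker_neg (b : ℕ → ℝ) (n : ℕ) (t : ℝ) : ker b n (-t) = ker b n t := by
  simp only [ker_eq, mul_neg, Real.cos_neg]

lemma sum_cos (M : ℕ) (hM : 0 < M) (j : ℤ) (hj : j ≠ 0) (h1 : -(M : ℤ) < j) (h2 : j < M) (α : ℝ) :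
    ∑ i ∈ range M, Real.cos (j * (α + 2 * Real.pi * i / M)) = 0 := by
  have hM' : (M : ℂ) ≠ 0 := by exact_mod_cast hM.ne'
  set z : ℂ := Complex.exp (2 * Real.pi * Complex.I * (j / M)) with hz
  have hzM : z ^ M = 1 := by
    rw [hz, ← Complex.exp_nat_mul, Complex.exp_eq_one_iff]
    exact ⟨j, by field_simp⟩
  have hz1 : z ≠ 1 := by
    intro h
    rw [hz, Complex.exp_eq_one_iff] at h
    obtain ⟨m, hm⟩ := h
    have hpi : (2 * Real.pi * Complex.I : ℂ) ≠ 0 := Complex.two_pi_I_ne_zero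
    rw [mul_comm (m : ℂ)] at hm
    have := mul_left_cancel₀ hpi hm
    rw [div_eq_iff hM'] at this
    have h3 : j = m * M := by exact_mod_cast this
    have hMz : (0 : ℤ) < M := by exact_mod_cast hM
    have : m < 1 := by by_contra! hc; nlinarith
    have : -1 < m := by by_contra! hc; nlinarith
    have : m = 0 := by omega
    subst this
    simp at h3
    exact hj h3
  have hgeom : ∑ i ∈ range M, z ^ i = 0 := by
    rw [geom_sum_eq hz1, hzM]; simp
  have : ∀ i : ℕ, Real.cos (j * (α + 2 * Real.pi * i / M))
      = (Complex.exp (((j * α : ℝ) : ℂ) * Complex.I) * z ^ i).re := by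
    intro i
    rw [← Complex.exp_ofReal_mul_I_re, hz, ← Complex.exp_nat_mul, ← Complex.exp_add]
    congr 2
    push_cast
    field_simp
  simp only [this]
  rw [← Complex.re_sum, ← mul_sum, hgeom]
  simp

lemma sum_ker (M : ℕ) (hM : 0 < M) (n : ℕ) (hn : n ≤ M) (b : ℕ → ℝ) (α : ℝ) :
    ∑ i ∈ range M, ker b n (α + 2 * Real.pi * i / M) = M * ∑ k ∈ range n, b k ^ 2 := by
  simp only [ker_eq]
  rw [sum_comm, mul_sum]
  refine sum_congr rfl fun k hk => ?_
  rw [sum_comm, sum_eq_single k]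
  · simp only [sub_self, Int.cast_zero, zero_mul, Real.cos_zero, sum_const, card_range, nsmul_eq_mul]
    ring
  · intro l hl hlk
    rw [← mul_sum, sum_cos M hM]
    · simp
    · intro h; apply hlk; omega
    · simp at hk hl; omega
    · simp at hk hl; omega
  · intro h; exact absurd hk h

/-- parabola coefficients -/
noncomputable def ca (N : ℕ) (k : ℕ) : ℝ := (k + 1) * (N - k)
/-- difference coefficients -/
noncomputable def cb (N : ℕ) (k : ℕ) : ℝ := N - 2 * k

lemma tele (N : ℕ) (z : ℂ) (n : ℕ) : ∑ k ∈ range n, (cb N k : ℂ) * z ^ k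
    = (1 - z) * ∑ k ∈ range n, (ca N k : ℂ) * z ^ k + n * (N + 1 - n) * z ^ n := by
  induction n with
  | zero => simp
  | succ n ih =>
    rw [sum_range_succ, sum_range_succ, ih]
    simp only [ca, cb]
    push_cast
    ring

lemma trig_cb (N : ℕ) (t : ℝ) : trig (cb N) (N + 1) t
    = (1 - Complex.exp (t * Complex.I)) * trig (ca N) N t := by
  unfold trig
  rw [tele, sum_range_succ]
  simp only [ca]
  push_cast
  ring

lemma ker_cb (N : ℕ) (t : ℝ) : ker (cb N) (N + 1) t
    = 2 * (1 - Real.cos t) * ker (ca N) N t := by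
  unfold ker
  rw [trig_cb, Complex.normSq_mul]
  congr 1
  rw [Complex.exp_mul_I, Complex.normSq_apply, ← Complex.ofReal_cos, ← Complex.ofReal_sin]
  simp only [Complex.sub_re, Complex.sub_im, Complex.add_re, Complex.add_im, Complex.one_re,
    Complex.one_im, Complex.mul_re, Complex.mul_im, Complex.ofReal_re, Complex.ofReal_im,
    Complex.I_re, Complex.I_im]
  nlinarith [Real.sin_sq_add_cos_sq t]

lemma sum_ca (N : ℕ) : ∑ k ∈ range N, ca N k ^ 2
    = (N + 1) * ((N + 1) ^ 4 - 1) / 30 := by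
  have : ∀ n : ℕ, ∑ k ∈ range n, ca N k ^ 2
      = ((N : ℝ) + 1) ^ 2 * (n * (n + 1) * (2 * n + 1) / 6)
        - 2 * (N + 1) * (n * (n + 1) / 2) ^ 2
        + n * (n + 1) * (2 * n + 1) * (3 * n ^ 2 + 3 * n - 1) / 30 := by
    intro n
    induction n with
    | zero => simp
    | succ n ih =>
      rw [sum_range_succ, ih]
      simp only [ca]
      push_cast
      ring
  rw [this]
  ring

lemma sum_cb (N : ℕ) : ∑ k ∈ range (N + 1), cb N k ^ 2
    = (N + 1) * ((N + 1) ^ 2 - 1) / 3 := by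
  have : ∀ n : ℕ, ∑ k ∈ range n, cb N k ^ 2
      = (n : ℝ) * N ^ 2 - 2 * N * n * (n - 1) + 4 * ((n - 1) * n * (2 * n - 1) / 6) := by
    intro n
    induction n with
    | zero => simp
    | succ n ih =>
      rw [sum_range_succ, ih]
      simp only [cb]
      push_cast
      ring
  rw [this]
  push_cast
  ring

lemma abs_cos_sub (p q : ℝ) : (|Real.cos p| - |Real.cos q|) ^ 2 ≤ 1 - Real.cos (2 * (p - q)) := by
  have h1 := abs_add_le (Real.cos p * Real.cos q) (Real.sin p * Real.sin q)
  rw [← Real.cos_sub, abs_mul, abs_mul] at h1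
  have h2 := Real.abs_cos_le_one (p - q)
  rw [Real.cos_two_mul]
  have h3 := sq_abs (Real.cos (p - q))
  have h4 := abs_nonneg (Real.cos (p - q))
  have h5 := Real.sin_sq_add_cos_sq p
  have h6 := Real.sin_sq_add_cos_sq q
  rw [← sq_abs (Real.sin p), ← sq_abs (Real.cos p)] at h5
  rw [← sq_abs (Real.sin q), ← sq_abs (Real.cos q)] at h6
  nlinarith [sq_nonneg (|Real.sin p| - |Real.sin q|)]

/-- the (unnormalised) basis polynomials -/
noncomputable def bp (N : ℕ) (β : ℝ) : Polynomial ℝ :=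
  ∑ k ∈ range N, ∑ l ∈ range N,
    Polynomial.C (ca N k * ca N l * Real.cos (((k : ℤ) - (l : ℤ) : ℤ) * β)) *
      (Polynomial.Chebyshev.T ℝ ((k : ℤ) - (l : ℤ))).comp (Polynomial.C 2 * Polynomial.X - Polynomial.C 1)

lemma bp_deg (N : ℕ) (β : ℝ) : (bp N β).natDegree ≤ N - 1 := by
  unfold bp
  refine Polynomial.natDegree_sum_le_of_forall_le _ _ fun k hk => ?_
  refine Polynomial.natDegree_sum_le_of_forall_le _ _ fun l hl => ?_
  refine (Polynomial.natDegree_C_mul_le _ _).trans ?_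
  refine Polynomial.natDegree_comp_le.trans ?_
  have h1 : (Polynomial.C (2:ℝ) * Polynomial.X - Polynomial.C 1).natDegree ≤ 1 := by
    compute_degree
  rw [Polynomial.Chebyshev.natDegree_T]
  simp at hk hl
  calc _ ≤ ((k : ℤ) - (l : ℤ)).natAbs * 1 := Nat.mul_le_mul_left _ h1
    _ ≤ N - 1 := by omega

lemma bp_eval (N : ℕ) (α β : ℝ) : (bp N β).eval ((1 + Real.cos α) / 2)
    = (ker (ca N) N (α + β) + ker (ca N) N (-α + β)) / 2 := by
  have h0 : (2:ℝ) * ((1 + Real.cos α) / 2) - 1 = Real.cos α := by ring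
  rw [ker_eq, ker_eq, ← sum_add_distrib, sum_div, bp, Polynomial.eval_finsetSum]
  refine sum_congr rfl fun k _ => ?_
  rw [← sum_add_distrib, sum_div, Polynomial.eval_finsetSum]
  refine sum_congr rfl fun l _ => ?_
  simp only [Polynomial.eval_mul, Polynomial.eval_comp, Polynomial.eval_sub, Polynomial.eval_C,
    Polynomial.eval_X]
  rw [h0, Polynomial.Chebyshev.T_real_cos]
  rw [mul_add, mul_add, Real.cos_add, Real.cos_add, mul_neg, Real.cos_neg, Real.sin_neg]
  ring

lemma sqrt_cos (t : ℝ) : Real.sqrt ((1 + Real.cos t) / 2) = |Real.cos (t / 2)| := by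
  rw [← Real.sqrt_sq_eq_abs]
  congr 1
  rw [Real.cos_sq]
  rw [show 2 * (t / 2) = t by ring]
  ring

lemma exists_weights (K : ℕ) (hK : 1 ≤ K) : ∃ (x₀ : ℕ → ℝ) (p : ℕ → Polynomial ℝ),
    (∀ i, (p i).natDegree ≤ K) ∧
    ∀ x ∈ Set.Icc (0:ℝ) 1, (∀ i, 0 ≤ (p i).eval x) ∧
      ∑ i ∈ range (K + 2), (p i).eval x = 1 ∧
      ∑ i ∈ range (K + 2), (p i).eval x * |Real.sqrt x - Real.sqrt (x₀ i)| ≤ 3 / K := by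
  have hKr : (1:ℝ) ≤ K := by exact_mod_cast hK
  set N := K + 1 with hN
  have hNr : (N : ℝ) = K + 1 := by rw [hN]; push_cast; ring
  set M := K + 2 with hM
  have hMr : (M : ℝ) = N + 1 := by rw [hM, hNr]; push_cast; ring
  set S : ℝ := ∑ k ∈ range N, ca N k ^ 2 with hS
  have hSv : S = (N + 1) * ((N + 1) ^ 4 - 1) / 30 := sum_ca N
  have hSpos : 0 < S := by
    rw [hSv, hNr]
    have : (1:ℝ) < (K + 1 + 1) ^ 4 := one_lt_pow₀ (by linarith) (by norm_num)
    have : 0 < (K:ℝ) + 1 + 1 := by linarith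
    apply div_pos (mul_pos this (by linarith)) (by norm_num)
  have hMpos : (0:ℝ) < M := by rw [hMr, hNr]; linarith
  have hMS : 0 < M * S := mul_pos hMpos hSpos
  let β : ℕ → ℝ := fun i => 2 * Real.pi * i / M
  refine ⟨fun i => (1 + Real.cos (β i)) / 2, fun i => Polynomial.C (M * S)⁻¹ * bp N (β i), ?_, ?_⟩
  · intro i
    exact (Polynomial.natDegree_C_mul_le _ _).trans (bp_deg N _)
  intro x hx
  obtain ⟨α, rfl⟩ : ∃ α, x = (1 + Real.cos α) / 2 := by
    refine ⟨Real.arccos (2 * x - 1), ?_⟩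
    rw [Real.cos_arccos (by linarith [hx.1]) (by linarith [hx.2])]
    ring
  have hev : ∀ i, (Polynomial.C (M * S)⁻¹ * bp N (β i)).eval ((1 + Real.cos α) / 2)
      = (M * S)⁻¹ * ((ker (ca N) N (α + β i) + ker (ca N) N (-α + β i)) / 2) := by
    intro i
    rw [Polynomial.eval_mul, Polynomial.eval_C, bp_eval]
  have hnn : ∀ i, 0 ≤ (M * S)⁻¹ * ((ker (ca N) N (α + β i) + ker (ca N) N (-α + β i)) / 2) := by
    intro i
    have := ker_nonneg (ca N) N (α + β i)
    have := ker_nonneg (ca N) N (-α + β i)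
    positivity
  have hsum : ∑ i ∈ range M, (M * S)⁻¹ * ((ker (ca N) N (α + β i) + ker (ca N) N (-α + β i)) / 2) = 1 := by
    rw [← mul_sum, ← sum_div, sum_add_distrib, sum_ker M (by omega) N (by omega),
      sum_ker M (by omega) N (by omega), ← hS]
    field_simp
    norm_num
  refine ⟨fun i => by rw [hev]; exact hnn i, by simp only [hev]; exact hsum, ?_⟩
  simp only [hev, sqrt_cos]
  -- second moment
  have hsec : ∑ i ∈ range M, (M * S)⁻¹ * ((ker (ca N) N (α + β i) + ker (ca N) N (-α + β i)) / 2) *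
      (|Real.cos (α / 2)| - |Real.cos (β i / 2)|) ^ 2 ≤ 5 / (K : ℝ) ^ 2 := by
    have hb : ∀ i ∈ range M, (M * S)⁻¹ * ((ker (ca N) N (α + β i) + ker (ca N) N (-α + β i)) / 2) *
      (|Real.cos (α / 2)| - |Real.cos (β i / 2)|) ^ 2 ≤
        (M * S)⁻¹ * ((ker (cb N) (N + 1) (α + β i) + ker (cb N) (N + 1) (-α + β i)) / 4) := by
      intro i _
      have e1 := abs_cos_sub (α / 2) (-(β i / 2))
      have e2 := abs_cos_sub (α / 2) (β i / 2)
      rw [Real.cos_neg, show 2 * (α / 2 - -(β i / 2)) = α + β i by ring] at e1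
      rw [show 2 * (α / 2 - (β i / 2)) = -(-α + β i) by ring, Real.cos_neg] at e2
      rw [mul_assoc]
      refine mul_le_mul_of_nonneg_left ?_ (inv_nonneg.2 hMS.le)
      rw [ker_cb, ker_cb]
      have f1 := mul_le_mul_of_nonneg_left e1 (ker_nonneg (ca N) N (α + β i))
      have f2 := mul_le_mul_of_nonneg_left e2 (ker_nonneg (ca N) N (-α + β i))
      linarith
    refine (sum_le_sum hb).trans ?_
    rw [← mul_sum, ← sum_div, sum_add_distrib, sum_ker M (by omega) (N + 1) (by omega),
      sum_ker M (by omega) (N + 1) (by omega), sum_cb, inv_mul_le_iff₀ hMS, hSv, hMr, hNr]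
    rw [mul_div_assoc' _ (5:ℝ), le_div_iff₀ (by positivity)]
    have hK0 : (0:ℝ) ≤ K := by linarith
    rw [← sub_nonneg]
    ring_nf
    positivity
  have hfin : ∑ i ∈ range M, (M * S)⁻¹ * ((ker (ca N) N (α + β i) + ker (ca N) N (-α + β i)) / 2) *
      |(|Real.cos (α / 2)| - |Real.cos (β i / 2)|)| ≤
      ∑ i ∈ range M, ((K / 2) * ((M * S)⁻¹ * ((ker (ca N) N (α + β i) + ker (ca N) N (-α + β i)) / 2) *
      (|Real.cos (α / 2)| - |Real.cos (β i / 2)|) ^ 2) + (1 / (2 * K)) *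
       ((M * S)⁻¹ * ((ker (ca N) N (α + β i) + ker (ca N) N (-α + β i)) / 2))) := by
    refine sum_le_sum fun i _ => ?_
    set w := (M * S)⁻¹ * ((ker (ca N) N (α + β i) + ker (ca N) N (-α + β i)) / 2) with hw
    have hwn : 0 ≤ w := hnn i
    set d := |Real.cos (α / 2)| - |Real.cos (β i / 2)| with hd
    have : |d| ≤ (K / 2) * d ^ 2 + 1 / (2 * K) := by
      rw [← sq_abs d]
      have hK0 : (0:ℝ) < K := by linarith
      have : (K / 2) * |d| ^ 2 + 1 / (2 * K) - |d| = (K * |d| - 1) ^ 2 / (2 * K) := by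
        field_simp; ring
      have : 0 ≤ (K * |d| - 1) ^ 2 / (2 * K) := by positivity
      linarith
    have := mul_le_mul_of_nonneg_left this hwn
    linarith
  refine hfin.trans ?_
  rw [sum_add_distrib, ← mul_sum, ← mul_sum, hsum]
  have hK0 : (0:ℝ) < K := by linarith
  have := mul_le_mul_of_nonneg_left hsec (show (0:ℝ) ≤ K / 2 by positivity)
  have e : (K:ℝ) / 2 * (5 / K ^ 2) + 1 / (2 * K) * 1 = 3 / K := by field_simp; norm_num
  linarith

lemma isBivar_sum (K : ℕ) (p : ℕ → Polynomial ℝ) (hp : ∀ i, (p i).natDegree ≤ K)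
    (m : ℕ) (c : ℕ → ℕ → ℝ) :
    IsBivarPoly K fun x y => ∑ i ∈ range m, ∑ j ∈ range m, c i j * (p i).eval x * (p j).eval y := by
  refine ⟨fun a b => ∑ i ∈ range m, ∑ j ∈ range m, c i j * (p i).coeff a * (p j).coeff b, ?_⟩
  intro x y
  have h : ∀ i (z : ℝ), (p i).eval z = ∑ a : Fin (K + 1), (p i).coeff a * z ^ (a : ℕ) := by
    intro i z
    rw [Polynomial.eval_eq_sum_range' (Nat.lt_succ_of_le (hp i))]
    exact (Fin.sum_univ_eq_sum_range (fun a => (p i).coeff a * z ^ a) (K + 1)).symm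
  have e1 : ∀ i j, c i j * (p i).eval x * (p j).eval y = ∑ a : Fin (K + 1), ∑ b : Fin (K + 1),
      c i j * (p i).coeff a * (p j).coeff b * x ^ (a : ℕ) * y ^ (b : ℕ) := by
    intro i j
    rw [h i, h j, mul_assoc, sum_mul_sum, mul_sum]
    refine sum_congr rfl fun a _ => ?_
    rw [mul_sum]
    refine sum_congr rfl fun b _ => ?_
    ring
  simp only [e1, sum_mul]
  have e2 : ∀ i, ∑ j ∈ range m, ∑ a : Fin (K + 1), ∑ b : Fin (K + 1),
      c i j * (p i).coeff a * (p j).coeff b * x ^ (a : ℕ) * y ^ (b : ℕ)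
      = ∑ a : Fin (K + 1), ∑ b : Fin (K + 1), ∑ j ∈ range m,
      c i j * (p i).coeff a * (p j).coeff b * x ^ (a : ℕ) * y ^ (b : ℕ) := by
    intro i
    rw [sum_comm]
    exact sum_congr rfl fun a _ => sum_comm
  simp only [e2]
  rw [sum_comm]
  exact sum_congr rfl fun a _ => sum_comm

/-- Jackson-type bound -/
lemma jackson (K : ℕ) (hK : 1 ≤ K) (F : ℝ → ℝ → ℝ)
    (hF : ∀ x y x' y', |F x y - F x' y'| ≤
      |Real.sqrt x' - Real.sqrt x| + |Real.sqrt y' - Real.sqrt y|) :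
    ∃ P, IsBivarPoly K P ∧ ∀ x ∈ Set.Icc (0:ℝ) 1, ∀ y ∈ Set.Icc (0:ℝ) 1,
      |P x y - F x y| ≤ 6 / K := by
  obtain ⟨x₀, p, hdeg, hp⟩ := exists_weights K hK
  refine ⟨_, isBivar_sum K p hdeg (K + 2) (fun i j => F (x₀ i) (x₀ j)), ?_⟩
  intro x hx y hy
  obtain ⟨nx, sx, ex⟩ := hp x hx
  obtain ⟨ny, sy, ey⟩ := hp y hy
  have e1 : F x y = ∑ i ∈ range (K + 2), ∑ j ∈ range (K + 2),
      F x y * (p i).eval x * (p j).eval y := by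
    simp only [← mul_sum, sy, mul_one, sx]
  have e2 : ∑ i ∈ range (K + 2), ∑ j ∈ range (K + 2),
      ((p i).eval x * |Real.sqrt x - Real.sqrt (x₀ i)| * (p j).eval y
        + (p i).eval x * ((p j).eval y * |Real.sqrt y - Real.sqrt (x₀ j)|)) ≤ 6 / K := by
    simp only [sum_add_distrib, ← mul_sum, sy, mul_one, ← sum_mul, sx, one_mul]
    have : (6:ℝ) / K = 3 / K + 3 / K := by ring
    linarith
  refine le_trans ?_ e2
  rw [e1, ← sum_sub_distrib]
  refine (abs_sum_le_sum_abs _ _).trans (sum_le_sum fun i _ => ?_)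
  rw [← sum_sub_distrib]
  refine (abs_sum_le_sum_abs _ _).trans (sum_le_sum fun j _ => ?_)
  have : F (x₀ i) (x₀ j) * (p i).eval x * (p j).eval y - F x y * (p i).eval x * (p j).eval y
    = (F (x₀ i) (x₀ j) - F x y) * ((p i).eval x * (p j).eval y) := by ring
  rw [this, abs_mul, abs_of_nonneg (mul_nonneg (nx i) (ny j))]
  have := mul_le_mul_of_nonneg_right (hF (x₀ i) (x₀ j) x y) (mul_nonneg (nx i) (ny j))
  linarith

lemma bivar_continuous (K : ℕ) (u : ℝ → ℝ → ℝ) (hu : IsBivarPoly K u) :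
    Continuous fun z : ℝ × ℝ => u z.1 z.2 := by
  obtain ⟨c, hc⟩ := hu
  simp only [hc]
  fun_prop

lemma err_le (K : ℕ) (hK : 1 ≤ K) (u F : ℝ → ℝ → ℝ) (hu : IsBivarPoly K u)
    (hFc : Continuous fun z : ℝ × ℝ => F z.1 z.2)
    (hF : ∀ x y x' y', |F x y - F x' y'| ≤
      |Real.sqrt x' - Real.sqrt x| + |Real.sqrt y' - Real.sqrt y|)
    (hbest : ∀ P : ℝ → ℝ → ℝ, IsBivarPoly K P → sqErr u F ≤ sqErr P F)
    (x : ℝ) (hx : x ∈ Set.Icc (0:ℝ) 1) (y : ℝ) (hy : y ∈ Set.Icc (0:ℝ) 1) :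
    |u x y - F x y| ≤ 6 / K := by
  obtain ⟨P, hP, hPe⟩ := jackson K hK F hF
  have hcu := bivar_continuous K u hu
  have hbdd : BddAbove (Set.range fun z : (Set.Icc (0:ℝ) 1) × (Set.Icc (0:ℝ) 1) =>
      |u (z.1 : ℝ) (z.2 : ℝ) - F (z.1 : ℝ) (z.2 : ℝ)|) := by
    apply IsCompact.bddAbove
    apply isCompact_range
    have hc : Continuous fun z : (Set.Icc (0:ℝ) 1) × (Set.Icc (0:ℝ) 1) => ((z.1 : ℝ), (z.2 : ℝ)) := by
      fun_prop
    exact ((hcu.comp hc).sub (hFc.comp hc)).abs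
  have h1 : |u x y - F x y| ≤ sqErr u F := le_ciSup hbdd (⟨x, hx⟩, ⟨y, hy⟩)
  refine h1.trans ((hbest P hP).trans ?_)
  exact ciSup_le fun z => hPe _ z.1.2 _ z.2.2

end ProdApprox

/-- the product of best polynomial approximations of `√x + √y` and
`|√x − √y|` gives a pointwise-accurate approximation of `|x − y|` on `[0,1]²`. -/
theorem product_approx_abs :
    ∃ M : ℝ, 0 < M ∧
      ∀ K : ℕ, 1 ≤ K →
        ∀ u v : ℝ → ℝ → ℝ, IsBivarPoly K u → IsBivarPoly K v →
          (∀ P : ℝ → ℝ → ℝ, IsBivarPoly K P →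
            sqErr u (fun x y => Real.sqrt x + Real.sqrt y) ≤
              sqErr P (fun x y => Real.sqrt x + Real.sqrt y)) →
          (∀ P : ℝ → ℝ → ℝ, IsBivarPoly K P →
            sqErr v (fun x y => |Real.sqrt x - Real.sqrt y|) ≤
              sqErr P (fun x y => |Real.sqrt x - Real.sqrt y|)) →
          ∀ x ∈ Set.Icc (0:ℝ) 1, ∀ y ∈ Set.Icc (0:ℝ) 1,
            abs (u x y * v x y - u 0 0 * v 0 0 - |x - y|) ≤
              M * ((Real.sqrt x + Real.sqrt y) / K + 1 / (K : ℝ) ^ 2) := by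
  refine ⟨100, by norm_num, ?_⟩
  intro K hK u v hu hv hub hvb x hx y hy
  have hKr : (1:ℝ) ≤ K := by exact_mod_cast hK
  have hK0 : (0:ℝ) < K := by linarith
  have U := ProdApprox.err_le K hK u _ hu (by fun_prop) (by
    intro x y x' y'
    have := abs_add_le (Real.sqrt x - Real.sqrt x') (Real.sqrt y - Real.sqrt y')
    rw [abs_sub_comm (Real.sqrt x'), abs_sub_comm (Real.sqrt y')]
    refine le_trans (le_of_eq ?_) this
    congr 1
    ring) hub
  have V := ProdApprox.err_le K hK v _ hv (by fun_prop) (by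
    intro x y x' y'
    have h1 := abs_abs_sub_abs_le_abs_sub (Real.sqrt x - Real.sqrt y) (Real.sqrt x' - Real.sqrt y')
    have := abs_add_le (Real.sqrt x - Real.sqrt x') (Real.sqrt y' - Real.sqrt y)
    rw [abs_sub_comm (Real.sqrt x') (Real.sqrt x)]
    refine h1.trans (le_trans (le_of_eq ?_) this)
    congr 1
    ring) hvb
  have h0 : (0:ℝ) ∈ Set.Icc (0:ℝ) 1 := by simp
  have U0 := U 0 h0 0 h0
  have V0 := V 0 h0 0 h0
  have U1 := U x hx y hy
  have V1 := V x hx y hy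
  simp only [Real.sqrt_zero, add_zero, sub_zero, abs_zero] at U0 V0
  have sx := Real.sqrt_nonneg x
  have sy := Real.sqrt_nonneg y
  have hxy : |x - y| = (Real.sqrt x + Real.sqrt y) * |Real.sqrt x - Real.sqrt y| := by
    rw [← abs_of_nonneg (add_nonneg sx sy), ← abs_mul]
    congr 1
    nlinarith [Real.sq_sqrt hx.1, Real.sq_sqrt hy.1]
  have hg : |Real.sqrt x - Real.sqrt y| ≤ Real.sqrt x + Real.sqrt y := by
    rw [abs_le]; constructor <;> linarith
  rw [hxy]
  set f := Real.sqrt x + Real.sqrt y with hf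
  have hg0 : 0 ≤ |Real.sqrt x - Real.sqrt y| := abs_nonneg _
  set g := |Real.sqrt x - Real.sqrt y| with hgd
  have hf0 : 0 ≤ f := hg0.trans hg
  set e : ℝ := 6 / K with he
  have he0 : 0 ≤ e := by positivity
  have key : u x y * v x y - u 0 0 * v 0 0 - f * g
      = f * (v x y - g) + g * (u x y - f) + (u x y - f) * (v x y - g) - u 0 0 * v 0 0 := by ring
  have k1 : |f * (v x y - g)| ≤ f * e := by
    rw [abs_mul, abs_of_nonneg hf0]; exact mul_le_mul_of_nonneg_left V1 hf0
  have k2 : |g * (u x y - f)| ≤ f * e := by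
    rw [abs_mul, abs_of_nonneg hg0]; exact mul_le_mul hg U1 (abs_nonneg _) hf0
  have k3 : |(u x y - f) * (v x y - g)| ≤ e * e := by
    rw [abs_mul]; exact mul_le_mul U1 V1 (abs_nonneg _) he0
  have k4 : |u 0 0 * v 0 0| ≤ e * e := by
    rw [abs_mul]; exact mul_le_mul U0 V0 (abs_nonneg _) he0
  have tot : |u x y * v x y - u 0 0 * v 0 0 - f * g| ≤ 2 * (f * e) + 2 * (e * e) := by
    rw [key]
    rw [abs_le] at *
    constructor <;> linarith [k1.1, k1.2, k2.1, k2.2, k3.1, k3.2, k4.1, k4.2]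
  refine tot.trans ?_
  have r1 : 0 ≤ f / K := by positivity
  have r2 : 0 ≤ 1 / (K:ℝ) ^ 2 := by positivity
  have r3 : 2 * (f * e) + 2 * (e * e) = 12 * (f / K) + 72 * (1 / (K:ℝ) ^ 2) := by
    rw [he]; field_simp; ring
  rw [r3]
  linarith
end

section
/- There exist universal constants D > 1 and c > 0 such that for every positive integer L and every a ∈ (0, 1/2], with f(x;a) = (|x − a| − a)/x for x > 0: if 1/L² ≤ a ≤ 1/2 then E_L[f(·;a); [a/D, 1]] ≥ c/(L√a), and if 0 < a < 1/L² then E_L[f(·;a); [a/D, 1]] ≥ c. -/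
open scoped BigOperators
open Real

namespace FXA

lemma int_cos (n : ℤ) (hn : n ≠ 0) (φ : ℝ) :
    ∫ θ in (-π)..π, cos (n * θ + φ) = 0 := by
  have hn' : (n : ℝ) ≠ 0 := by exact_mod_cast hn
  have h : ∀ x ∈ Set.uIcc (-π) π,
      HasDerivAt (fun θ : ℝ => sin (n * θ + φ) / n) (cos (n * x + φ)) x := by
    intro x _
    have h1 : HasDerivAt (fun θ : ℝ => (n : ℝ) * θ + φ) (n * 1) x :=
      ((hasDerivAt_id x).const_mul (n : ℝ)).add_const φ
    have h2 := h1.sin.div_const (n : ℝ)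
    refine h2.congr_deriv ?_
    field_simp
  rw [intervalIntegral.integral_eq_sub_of_hasDerivAt h
    (Continuous.intervalIntegrable (by fun_prop) _ _)]
  have : (n : ℝ) * π + φ = (n * (-π) + φ) + n * (2 * π) := by ring
  rw [this, sin_add_int_mul_two_pi]
  ring

lemma int_pow_cos (p q φ : ℝ) (m : ℕ) : ∀ n : ℤ, (m : ℤ) < n →
    ∫ θ in (-π)..π, (p + q * cos θ) ^ m * cos (n * θ + φ) = 0 := by
  induction m with
  | zero =>
    intro n hn
    simpa using int_cos n (by push_cast at hn; omega) φ
  | succ m ih =>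
    intro n hn
    push_cast at hn
    have e : ∀ θ : ℝ, (p + q * cos θ) ^ (m + 1) * cos (n * θ + φ)
        = p * ((p + q * cos θ) ^ m * cos (n * θ + φ))
        + (q / 2 * ((p + q * cos θ) ^ m * cos ((n + 1 : ℤ) * θ + φ))
        + q / 2 * ((p + q * cos θ) ^ m * cos ((n - 1 : ℤ) * θ + φ))) := by
      intro θ
      have h1 : ((n + 1 : ℤ) : ℝ) * θ + φ = (n * θ + φ) + θ := by push_cast; ring
      have h2 : ((n - 1 : ℤ) : ℝ) * θ + φ = (n * θ + φ) - θ := by push_cast; ring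
      rw [h1, h2, cos_add (n * θ + φ), cos_sub (n * θ + φ)]
      ring
    simp_rw [e]
    rw [intervalIntegral.integral_add (Continuous.intervalIntegrable (by fun_prop) _ _)
      (Continuous.intervalIntegrable (by fun_prop) _ _),
      intervalIntegral.integral_add (Continuous.intervalIntegrable (by fun_prop) _ _)
      (Continuous.intervalIntegrable (by fun_prop) _ _)]
    simp only [intervalIntegral.integral_const_mul]
    rw [ih n (by omega), ih (n + 1) (by omega), ih (n - 1) (by omega)]
    simp

lemma int_poly_cos (p q φ : ℝ) (Q : Polynomial ℝ) (d : ℕ) (hd : Q.natDegree ≤ d)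
    (n : ℤ) (hn : (d : ℤ) < n) :
    ∫ θ in (-π)..π, Q.eval (p + q * cos θ) * cos (n * θ + φ) = 0 := by
  simp_rw [Polynomial.eval_eq_sum_range, Finset.sum_mul]
  rw [intervalIntegral.integral_finsetSum]
  · apply Finset.sum_eq_zero
    intro i hi
    simp only [mul_assoc, intervalIntegral.integral_const_mul]
    rw [int_pow_cos p q φ i n (by have := Finset.mem_range.1 hi; omega), mul_zero]
  · intro i _
    exact Continuous.intervalIntegrable (by fun_prop) _ _

lemma int_abs (τ : ℝ) (h0 : 0 < τ) (h1 : τ < π) (n : ℤ) (hn : 2 ≤ n) :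
    ∫ θ in (-π)..π, |cos θ - cos τ| * cos (n * θ + (-(n * τ))) =
      -(4 / ((n : ℝ) ^ 2 - 1) * (sin τ * cos (n * τ) ^ 2
        - cos τ * sin (n * τ) * cos (n * τ) / n)) := by
  have hnR : (2 : ℝ) ≤ n := by exact_mod_cast hn
  set φ : ℝ := -(n * τ) with hφ
  have hne : (n : ℝ) ≠ 0 := by linarith
  have hne1 : (n : ℝ) + 1 ≠ 0 := by linarith
  have hne2 : (n : ℝ) - 1 ≠ 0 := by linarith
  have hsq : (n : ℝ) ^ 2 - 1 ≠ 0 := by nlinarith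
  set H : ℝ → ℝ := fun θ => (1 / 2) * (sin ((n + 1) * θ + φ) / (n + 1)
    + sin ((n - 1) * θ + φ) / (n - 1)) - cos τ * (sin (n * θ + φ) / n) with hH
  have hder : ∀ x, HasDerivAt H ((cos x - cos τ) * cos (n * x + φ)) x := by
    intro x
    have g : ∀ m : ℝ, m ≠ 0 →
        HasDerivAt (fun θ : ℝ => sin (m * θ + φ) / m) (cos (m * x + φ)) x := by
      intro m hm
      have h1 : HasDerivAt (fun θ : ℝ => m * θ + φ) (m * 1) x :=
        ((hasDerivAt_id x).const_mul m).add_const φ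
      have h2 := h1.sin.div_const m
      refine h2.congr_deriv ?_
      field_simp
    have := (((g _ hne1).add (g _ hne2)).const_mul (1 / 2)).sub ((g _ hne).const_mul (cos τ))
    refine this.congr_deriv ?_
    have h1 : ((n : ℝ) + 1) * x + φ = (n * x + φ) + x := by ring
    have h2 : ((n : ℝ) - 1) * x + φ = (n * x + φ) - x := by ring
    rw [h1, h2, cos_add (n * x + φ), cos_sub (n * x + φ)]
    ring
  have hint : ∀ c d : ℝ, ∫ θ in c..d, (cos θ - cos τ) * cos (n * θ + φ) = H d - H c := by
    intro c d
    exact intervalIntegral.integral_eq_sub_of_hasDerivAt (fun x _ => hder x)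
      (Continuous.intervalIntegrable (by fun_prop) _ _)
  have hii : ∀ c d : ℝ, IntervalIntegrable
      (fun θ => |cos θ - cos τ| * cos (n * θ + φ)) MeasureTheory.volume c d :=
    fun c d => Continuous.intervalIntegrable (by fun_prop) _ _
  rw [← intervalIntegral.integral_add_adjacent_intervals (hii (-π) (-τ)) (hii (-τ) π),
    ← intervalIntegral.integral_add_adjacent_intervals (hii (-τ) τ) (hii τ π)]
  have i1 : ∫ θ in (-π)..(-τ), |cos θ - cos τ| * cos (n * θ + φ) = -(H (-τ) - H (-π)) := by
    rw [← hint, ← intervalIntegral.integral_neg]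
    apply intervalIntegral.integral_congr
    intro θ hθ
    rw [Set.uIcc_of_le (by linarith)] at hθ
    have : cos θ ≤ cos τ := by
      rw [← cos_neg θ]
      exact cos_le_cos_of_nonneg_of_le_pi h0.le (by linarith [hθ.1]) (by linarith [hθ.2])
    simp only
    rw [abs_of_nonpos (by linarith)]; ring
  have i3 : ∫ θ in τ..π, |cos θ - cos τ| * cos (n * θ + φ) = -(H π - H τ) := by
    rw [← hint, ← intervalIntegral.integral_neg]
    apply intervalIntegral.integral_congr
    intro θ hθ
    rw [Set.uIcc_of_le (by linarith)] at hθ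
    have : cos θ ≤ cos τ := 
      cos_le_cos_of_nonneg_of_le_pi h0.le (by linarith [hθ.2]) (by linarith [hθ.1])
    simp only
    rw [abs_of_nonpos (by linarith)]; ring
  have i2 : ∫ θ in (-τ)..τ, |cos θ - cos τ| * cos (n * θ + φ) = H τ - H (-τ) := by
    rw [← hint]
    apply intervalIntegral.integral_congr
    intro θ hθ
    rw [Set.uIcc_of_le (by linarith)] at hθ
    have : cos τ ≤ cos θ := by
      rw [← cos_abs θ]
      exact cos_le_cos_of_nonneg_of_le_pi (abs_nonneg _) (by linarith)
        (abs_le.2 ⟨hθ.1, hθ.2⟩)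
    simp only
    rw [abs_of_nonneg (by linarith)]
  rw [i1, i2, i3]
  have hper : H π = H (-π) := by
    have g : ∀ m : ℤ, sin ((m : ℝ) * π + φ) = sin ((m : ℝ) * (-π) + φ) := by
      intro m
      have : (m : ℝ) * π + φ = (m * (-π) + φ) + m * (2 * π) := by ring
      rw [this, sin_add_int_mul_two_pi]
    have g1 := g n
    have g2 := g (n + 1)
    have g3 := g (n - 1)
    push_cast at g2 g3
    simp only [hH, g1, g2, g3]
  have e1 : H τ = (1 / 2) * (sin τ / (n + 1) - sin τ / (n - 1)) := by
    simp only [hH, hφ]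
    have h1 : ((n : ℝ) + 1) * τ + -(n * τ) = τ := by ring
    have h2 : ((n : ℝ) - 1) * τ + -(n * τ) = -τ := by ring
    have h3 : (n : ℝ) * τ + -(n * τ) = 0 := by ring
    rw [h1, h2, h3, sin_neg, sin_zero]; ring
  set A := (n : ℝ) * τ with hA
  have e2 : H (-τ) = (1 / 2) * (-(sin (2 * A) * cos τ + cos (2 * A) * sin τ) / (n + 1)
      - (sin (2 * A) * cos τ - cos (2 * A) * sin τ) / (n - 1)) + cos τ * (sin (2 * A) / n) := by
    simp only [hH, hφ]
    have h1 : ((n : ℝ) + 1) * (-τ) + -A = -(2 * A + τ) := by rw [hA]; ring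
    have h2 : ((n : ℝ) - 1) * (-τ) + -A = -(2 * A - τ) := by rw [hA]; ring
    have h3 : (n : ℝ) * (-τ) + -A = -(2 * A) := by rw [hA]; ring
    rw [h1, h2, h3, sin_neg, sin_neg, sin_neg, sin_add, sin_sub]; ring
  have : -(H (-τ) - H (-π)) + (H τ - H (-τ) + -(H π - H τ)) = 2 * (H τ - H (-τ)) := by
    rw [hper]; ring
  rw [this, e1, e2, sin_two_mul, cos_two_mul]
  have hf : (n : ℝ) ^ 2 - 1 = (n + 1) * (n - 1) := by ring
  rw [hf]
  field_simp
  ring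

end FXA
namespace FXA

/-- weights -/
noncomputable def v (N k : ℕ) : ℝ := k * ((N : ℝ) - k)

lemma v_nonneg {N k : ℕ} (h : k < N) : 0 ≤ v N k := by
  have : (k : ℝ) ≤ N := by exact_mod_cast h.le
  unfold v
  have h0 : (0 : ℝ) ≤ k := by positivity
  exact mul_nonneg h0 (by linarith)

lemma sum_v (N : ℕ) : ∑ k ∈ Finset.range N, v N k = N * ((N : ℝ) ^ 2 - 1) / 6 := by
  have h : ∀ n : ℕ, ∑ k ∈ Finset.range n, v N k
      = (N : ℝ) * (n * (n - 1) / 2) - n * (n - 1) * (2 * n - 1) / 6 := by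
    intro n
    induction n with
    | zero => simp
    | succ n ih => rw [Finset.sum_range_succ, ih]; unfold v; push_cast; ring
  rw [h]; ring

lemma sum_v_sq (N : ℕ) :
    ∑ k ∈ Finset.range N, v N k * v N k = N * ((N : ℝ) ^ 4 - 1) / 30 := by
  have h : ∀ n : ℕ, ∑ k ∈ Finset.range n, v N k * v N k
      = (N : ℝ) ^ 2 * (n * (n - 1) * (2 * n - 1) / 6) - 2 * N * (n * (n - 1) / 2) ^ 2
        + n * (n - 1) * (2 * n - 1) * (3 * (n : ℝ) ^ 2 - 3 * n - 1) / 30 := by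
    intro n
    induction n with
    | zero => simp
    | succ n ih => rw [Finset.sum_range_succ, ih]; unfold v; push_cast; ring
  rw [h]; ring

lemma sum_v_shift (N : ℕ) :
    ∑ k ∈ Finset.range N, v N k * v N (k + 1)
      = N * ((N : ℝ) ^ 2 - 1) * ((N : ℝ) ^ 2 - 4) / 30 := by
  have h : ∀ n : ℕ, ∑ k ∈ Finset.range n, v N k * v N (k + 1)
      = (N : ℝ) ^ 2 * (n * (n - 1) * (2 * n - 1) / 6) - 2 * N * (n * (n - 1) / 2) ^ 2
        + n * (n - 1) * (2 * n - 1) * (3 * (n : ℝ) ^ 2 - 3 * n - 1) / 30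
        + ((N : ℝ) ^ 2 - N) * (n * (n - 1) / 2) - 3 * N * (n * (n - 1) * (2 * n - 1) / 6)
        + 2 * (n * (n - 1) / 2) ^ 2 + n * (n - 1) * (2 * n - 1) / 6 := by
    intro n
    induction n with
    | zero => simp
    | succ n ih => rw [Finset.sum_range_succ, ih]; unfold v; push_cast; ring
  rw [h]; ring

/-- the localizing kernel -/
noncomputable def F (N : ℕ) (t : ℝ) : ℝ :=
  ∑ k ∈ Finset.range N, ∑ l ∈ Finset.range N, v N k * v N l * cos (((k : ℤ) - l : ℤ) * t)

lemma F_nonneg (N : ℕ) (t : ℝ) : 0 ≤ F N t := by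
  have : F N t = (∑ k ∈ Finset.range N, v N k * cos (k * t)) ^ 2
      + (∑ k ∈ Finset.range N, v N k * sin (k * t)) ^ 2 := by
    unfold F
    rw [pow_two, pow_two, Finset.sum_mul_sum, Finset.sum_mul_sum, ← Finset.sum_add_distrib]
    refine Finset.sum_congr rfl fun k _ => ?_
    rw [← Finset.sum_add_distrib]
    refine Finset.sum_congr rfl fun l _ => ?_
    have : (((k : ℤ) - l : ℤ) : ℝ) * t = k * t - l * t := by push_cast; ring
    rw [this, cos_sub]; ring
  rw [this]; positivity

lemma F_cont (N : ℕ) : Continuous (F N) := by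
  unfold F; fun_prop

lemma int_cos_ite (d : ℤ) (τ : ℝ) :
    ∫ θ in (-π)..π, cos (d * (θ - τ)) = if d = 0 then 2 * π else 0 := by
  split_ifs with h
  · subst h; simp; ring
  · have := int_cos d h (-(d * τ))
    rw [← this]
    congr 1; ext θ; congr 1; ring

lemma int_cos_cos_ite (d : ℤ) (τ : ℝ) :
    ∫ θ in (-π)..π, cos (d * (θ - τ)) * cos θ =
      (if d = 1 then π * cos τ else 0) + (if d = -1 then π * cos τ else 0) := by
  have g : ∀ (m : ℤ) (φ : ℝ), ∫ θ in (-π)..π, cos (m * θ + φ)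
      = if m = 0 then 2 * π * cos φ else 0 := by
    intro m φ
    split_ifs with h
    · subst h
      simp only [Int.cast_zero, zero_mul, zero_add, intervalIntegral.integral_const, smul_eq_mul]
      ring
    · exact int_cos m h φ
  have e : ∀ θ : ℝ, cos (d * (θ - τ)) * cos θ = (1 / 2) * cos ((d + 1 : ℤ) * θ + (-(d * τ)))
      + (1 / 2) * cos ((d - 1 : ℤ) * θ + (-(d * τ))) := by
    intro θ
    have h1 : ((d + 1 : ℤ) : ℝ) * θ + (-(d * τ)) = d * (θ - τ) + θ := by push_cast; ring
    have h2 : ((d - 1 : ℤ) : ℝ) * θ + (-(d * τ)) = d * (θ - τ) - θ := by push_cast; ring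
    rw [h1, h2, cos_add (d * (θ - τ)), cos_sub (d * (θ - τ))]; ring
  simp_rw [e]
  rw [intervalIntegral.integral_add (Continuous.intervalIntegrable (by fun_prop) _ _)
      (Continuous.intervalIntegrable (by fun_prop) _ _)]
  simp only [intervalIntegral.integral_const_mul]
  rw [g, g]
  by_cases h1 : d = 1
  · subst h1; simp; ring
  · by_cases h2 : d = -1
    · subst h2; simp; ring
    · have h3 : d + 1 ≠ 0 := by omega
      have h4 : d - 1 ≠ 0 := by omega
      simp [h1, h2, h3, h4]

lemma int_F (N : ℕ) (τ : ℝ) :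
    ∫ θ in (-π)..π, F N (θ - τ) = 2 * π * ∑ k ∈ Finset.range N, v N k * v N k := by
  unfold F
  rw [intervalIntegral.integral_finsetSum
    (fun i _ => Continuous.intervalIntegrable (by fun_prop) _ _), Finset.mul_sum]
  refine Finset.sum_congr rfl fun k hk => ?_
  rw [intervalIntegral.integral_finsetSum
    (fun i _ => Continuous.intervalIntegrable (by fun_prop) _ _)]
  simp only [intervalIntegral.integral_const_mul, int_cos_ite]
  rw [Finset.sum_eq_single k]
  · simp; ring
  · intro l _ hl
    rw [if_neg (by omega)]; simp
  · intro h; exact absurd hk h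

lemma int_F_cos (N : ℕ) (τ : ℝ) :
    ∫ θ in (-π)..π, F N (θ - τ) * cos θ
      = 2 * π * cos τ * ∑ k ∈ Finset.range N, v N k * v N (k + 1) := by
  have key : ∀ k ∈ Finset.range N, ∑ l ∈ Finset.range N,
      v N k * v N l * (if ((k : ℤ) - l) = -1 then π * cos τ else 0)
      = π * cos τ * (v N k * v N (k + 1)) := by
    intro k hk
    have hk' := Finset.mem_range.1 hk
    by_cases h : k + 1 < N
    · rw [Finset.sum_eq_single (k + 1)]
      · rw [if_pos (by push_cast; ring)]; ring
      · intro l _ hl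
        rw [if_neg (by omega)]; simp
      · intro h'; exact absurd (Finset.mem_range.2 h) h'
    · have hN : N = k + 1 := by omega
      have : v N (k + 1) = 0 := by unfold v; rw [hN]; simp
      rw [this, Finset.sum_eq_zero]
      · simp
      · intro l hl
        have := Finset.mem_range.1 hl
        rw [if_neg (by omega)]; simp
  unfold F
  simp_rw [Finset.sum_mul]
  rw [intervalIntegral.integral_finsetSum
    (fun i _ => Continuous.intervalIntegrable (by fun_prop) _ _)]
  have e : ∀ k ∈ Finset.range N, ∫ θ in (-π)..π, ∑ l ∈ Finset.range N,
      v N k * v N l * cos (((k : ℤ) - l : ℤ) * (θ - τ)) * cos θ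
      = ∑ l ∈ Finset.range N, v N k * v N l * (if ((k : ℤ) - l) = 1 then π * cos τ else 0)
      + ∑ l ∈ Finset.range N,
          v N k * v N l * (if ((k : ℤ) - l) = -1 then π * cos τ else 0) := by
    intro k _
    rw [intervalIntegral.integral_finsetSum
      (fun i _ => Continuous.intervalIntegrable (by fun_prop) _ _), ← Finset.sum_add_distrib]
    refine Finset.sum_congr rfl fun l _ => ?_
    simp only [mul_assoc (v N k * v N l), intervalIntegral.integral_const_mul, int_cos_cos_ite]
    rw [mul_add]
  rw [Finset.sum_congr rfl e, Finset.sum_add_distrib, Finset.sum_congr rfl key,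
    Finset.sum_comm]
  have key2 : ∀ k ∈ Finset.range N, ∑ l ∈ Finset.range N,
      v N l * v N k * (if ((l : ℤ) - k) = 1 then π * cos τ else 0)
      = π * cos τ * (v N k * v N (k + 1)) := by
    intro k hk
    rw [← key k hk]
    refine Finset.sum_congr rfl fun l _ => ?_
    by_cases h : (l : ℤ) - k = 1
    · rw [if_pos h, if_pos (by omega)]; ring
    · rw [if_neg h, if_neg (by omega)]; simp
  rw [Finset.sum_congr rfl key2, ← Finset.mul_sum]
  ring

end FXA
namespace FXA

lemma psi_bound (L τ n : ℝ) (hL : 1 ≤ L) (hs : 0 ≤ sin τ)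
    (h1 : 28 * L ≤ n) (h2 : n ≤ 35 * L) :
    4 * sin τ * cos (n * τ) ^ 2 / (1225 * L ^ 2) - 1 / (10000 * L ^ 3) ≤
    4 / (n ^ 2 - 1) * (sin τ * cos (n * τ) ^ 2
        - cos τ * sin (n * τ) * cos (n * τ) / n) := by
  have hL0 : 0 < L := by linarith
  have hn : 0 < n := by linarith
  have hn2 : 783 * L ^ 2 ≤ n ^ 2 - 1 := by nlinarith
  have hn3 : n ^ 2 - 1 ≤ 1225 * L ^ 2 := by nlinarith
  have hp : 0 < n ^ 2 - 1 := by nlinarith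
  have hsc : |cos τ * sin (n * τ) * cos (n * τ)| ≤ 1 / 2 := by
    have e : sin (n * τ) * cos (n * τ) = sin (2 * (n * τ)) / 2 := by rw [sin_two_mul]; ring
    rw [mul_assoc, e, abs_mul, abs_div]
    have := abs_cos_le_one τ
    have := abs_sin_le_one (2 * (n * τ))
    rw [abs_two]
    nlinarith [abs_nonneg (cos τ), abs_nonneg (sin (2 * (n * τ)))]
  have A : 4 * sin τ * cos (n * τ) ^ 2 / (1225 * L ^ 2)
      ≤ 4 * sin τ * cos (n * τ) ^ 2 / (n ^ 2 - 1) := by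
    apply div_le_div_of_nonneg_left _ hp hn3
    positivity
  have B : 4 / (n ^ 2 - 1) * (cos τ * sin (n * τ) * cos (n * τ) / n) ≤ 1 / (10000 * L ^ 3) := by
    have : 4 / (n ^ 2 - 1) * (cos τ * sin (n * τ) * cos (n * τ) / n)
      = 4 * (cos τ * sin (n * τ) * cos (n * τ)) / ((n ^ 2 - 1) * n) := by
      field_simp
    rw [this, div_le_div_iff₀ (by positivity) (by positivity)]
    have h3 : 783 * L ^ 2 * (28 * L) ≤ (n ^ 2 - 1) * n := by
      apply mul_le_mul hn2 h1 (by positivity) hp.le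
    have h4 := (abs_le.1 hsc).2
    have h5 : 0 < L ^ 3 := by positivity
    nlinarith
  have : 4 / (n ^ 2 - 1) * (sin τ * cos (n * τ) ^ 2
        - cos τ * sin (n * τ) * cos (n * τ) / n) = 4 * sin τ * cos (n * τ) ^ 2 / (n ^ 2 - 1)
      - 4 / (n ^ 2 - 1) * (cos τ * sin (n * τ) * cos (n * τ) / n) := by ring
  rw [this]; linarith

lemma cos_sq_pair (x y : ℝ) (h : |cos (x - y)| ≤ 1 / 2) : 1 / 2 ≤ cos x ^ 2 + cos y ^ 2 := by
  have e : cos x ^ 2 + cos y ^ 2 = 1 + cos (x + y) * cos (x - y) := by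
    rw [cos_add, cos_sub]
    nlinarith [sin_sq_add_cos_sq x, sin_sq_add_cos_sq y]
  have h1 : |cos (x + y) * cos (x - y)| ≤ 1 / 2 := by
    rw [abs_mul]
    have := abs_cos_le_one (x + y)
    nlinarith [abs_nonneg (cos (x + y)), abs_nonneg (cos (x - y))]
  linarith [(abs_le.1 h1).1]

lemma psi_pair (L τ n j : ℝ) (hL : 1 ≤ L) (hs : 1 / (2 * L) ≤ sin τ)
    (h1 : 28 * L ≤ n) (hj : 0 ≤ j) (h2 : n + j ≤ 35 * L) (hc : |cos (j * τ)| ≤ 1 / 2) :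
    sin τ / (1000 * L ^ 2) ≤
    4 / (n ^ 2 - 1) * (sin τ * cos (n * τ) ^ 2
        - cos τ * sin (n * τ) * cos (n * τ) / n)
    + 4 / ((n + j) ^ 2 - 1) * (sin τ * cos ((n + j) * τ) ^ 2
        - cos τ * sin ((n + j) * τ) * cos ((n + j) * τ) / (n + j)) := by
  have hL0 : 0 < L := by linarith
  have hs0 : 0 ≤ sin τ := le_trans (by positivity) hs
  have a1 := psi_bound L τ n hL hs0 h1 (by linarith)
  have a2 := psi_bound L τ (n + j) hL hs0 (by linarith) h2
  have a3 := cos_sq_pair ((n + j) * τ) (n * τ) (by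
    rw [show (n + j) * τ - n * τ = j * τ by ring]; exact hc)
  have a4 : 2 * sin τ / (1225 * L ^ 2) ≤ 4 * sin τ * cos (n * τ) ^ 2 / (1225 * L ^ 2)
      + 4 * sin τ * cos ((n + j) * τ) ^ 2 / (1225 * L ^ 2) := by
    rw [← add_div]
    apply div_le_div_of_nonneg_right _ (by positivity)
    nlinarith
  have a5 : 1 / (10000 * L ^ 3) ≤ 2 * sin τ / (10000 * L ^ 2) := by
    rw [div_le_div_iff₀ (by positivity) (by positivity)]
    rw [div_le_iff₀ (by positivity)] at hs
    nlinarith [pow_pos hL0 2, pow_pos hL0 3, mul_le_mul_of_nonneg_left hs (pow_pos hL0 2).le]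
  have a6 : sin τ / (1000 * L ^ 2) + 2 * (2 * sin τ / (10000 * L ^ 2))
      ≤ 2 * sin τ / (1225 * L ^ 2) := by
    have : 0 ≤ sin τ / L ^ 2 := by positivity
    have e1 : sin τ / (1000 * L ^ 2) = (sin τ / L ^ 2) / 1000 := by field_simp
    have e2 : 2 * sin τ / (10000 * L ^ 2) = (sin τ / L ^ 2) * (2 / 10000) := by field_simp
    have e3 : 2 * sin τ / (1225 * L ^ 2) = (sin τ / L ^ 2) * (2 / 1225) := by field_simp
    rw [e1, e2, e3]; nlinarith
  linarith

lemma exists_j (L : ℕ) (hL : 1 ≤ L) (τ : ℝ) (h1 : 1 / (L : ℝ) ≤ τ) (h2 : τ ≤ π / 3) :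
    ∃ j : ℕ, j ≤ 3 * L ∧ |cos (j * τ)| ≤ 1 / 2 := by
  have hLR : (1 : ℝ) ≤ L := by exact_mod_cast hL
  have hτ : 0 < τ := lt_of_lt_of_le (by positivity) h1
  have hp := pi_pos
  have hc : (π / 3 / τ) ≤ ⌈π / 3 / τ⌉₊ := Nat.le_ceil _
  have hc2 : (⌈π / 3 / τ⌉₊ : ℝ) < π / 3 / τ + 1 := Nat.ceil_lt_add_one (by positivity)
  refine ⟨⌈π / 3 / τ⌉₊, ?_, ?_⟩
  · apply Nat.ceil_le.2
    push_cast
    rw [div_le_iff₀ hτ]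
    rw [div_le_iff₀ (by positivity)] at h1
    nlinarith [pi_lt_four]
  · set j : ℝ := (⌈π / 3 / τ⌉₊ : ℝ)
    have b1 : π / 3 ≤ j * τ := by rwa [div_le_iff₀ hτ] at hc
    have b2 : j * τ ≤ 2 * π / 3 := by
      have : j * τ ≤ (π / 3 / τ + 1) * τ := by nlinarith
      have e : (π / 3 / τ + 1) * τ = π / 3 + τ := by field_simp
      linarith
    rw [abs_le]
    constructor
    · have := cos_le_cos_of_nonneg_of_le_pi (by linarith) (by linarith) b2
      have e : cos (2 * π / 3) = -(1 / 2) := by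
        rw [show 2 * π / 3 = π - π / 3 by ring, cos_pi_sub, cos_pi_div_three]
      linarith
    · have := cos_le_cos_of_nonneg_of_le_pi (by linarith) (by linarith) b1
      rwa [cos_pi_div_three] at this

set_option maxHeartbeats 2000000 in
lemma core (L : ℕ) (hL : 1 ≤ L) (a : ℝ) (ha0 : 0 < a) (ha : a ≤ 1 / 2)
    (haL : 1 / (L : ℝ) ^ 2 ≤ a) (P : Polynomial ℝ) (hP : P.natDegree ≤ L) (ε : ℝ)
    (hε : ∀ x : ℝ, 3 * a / 4 ≤ x → x ≤ 1 → |(|x - a| - a) - x * P.eval x| ≤ ε * x) :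
    (1 / 1000000) / (L * √a) ≤ ε := by
  have hLR : (1 : ℝ) ≤ L := by exact_mod_cast hL
  have hL0 : (0 : ℝ) < L := by linarith
  have hp := pi_pos
  have hε0 : 0 ≤ ε := by
    have := (abs_nonneg _).trans (hε 1 (by linarith) le_rfl)
    linarith
  obtain ⟨b, hb⟩ : ∃ b : ℝ, b = 3 * a / 4 := ⟨_, rfl⟩
  have hb1 : b ≤ 3 / 8 := by linarith
  have hb0 : 0 < b := by linarith
  have h1b : 0 < 1 - b := by linarith
  obtain ⟨α, hα⟩ : ∃ α : ℝ, α = (a - b) / (1 - b) := ⟨_, rfl⟩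
  have hαb : (1 - b) * α = a - b := by rw [hα]; field_simp
  have hα1 : a / 4 ≤ α := by rw [hα, le_div_iff₀ h1b]; nlinarith
  have hα2 : α ≤ 1 / 5 := by rw [hα, div_le_iff₀ h1b]; nlinarith
  obtain ⟨τ, hτ⟩ : ∃ τ : ℝ, τ = arccos (1 - 2 * α) := ⟨_, rfl⟩
  have hcos : cos τ = 1 - 2 * α := by rw [hτ]; exact cos_arccos (by linarith) (by linarith)
  have hτ0 : 0 < τ := by rw [hτ]; exact arccos_pos.2 (by linarith)
  have hτ3 : τ ≤ π / 3 := by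
    by_contra h
    push Not at h
    have h' := cos_lt_cos_of_nonneg_of_le_pi (by linarith : (0:ℝ) ≤ π / 3)
      (by rw [hτ]; exact arccos_le_pi _) h
    rw [cos_pi_div_three] at h'
    linarith
  have hsq : √a ^ 2 = a := Real.sq_sqrt ha0.le
  have hsa : 0 < √a := Real.sqrt_pos.2 ha0
  have hLa : 1 / (L : ℝ) ≤ √a := by
    apply Real.le_sqrt_of_sq_le
    rw [div_pow, one_pow]; exact haL
  have hs0 : 0 ≤ sin τ := sin_nonneg_of_nonneg_of_le_pi hτ0.le (by linarith)
  have hs : √a / 2 ≤ sin τ := by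
    apply (sq_le_sq₀ (by positivity) hs0).1
    have := sin_sq_add_cos_sq τ
    rw [hcos] at this
    nlinarith
  have hτL : 1 / (L : ℝ) ≤ τ := by
    refine hLa.trans ?_
    apply (sq_le_sq₀ (by positivity) hτ0.le).1
    have := one_sub_sq_div_two_le_cos (x := τ)
    rw [hcos] at this
    rw [hsq]; linarith
  have hsL : 1 / (2 * (L : ℝ)) ≤ sin τ := by
    have : 1 / (2 * (L : ℝ)) = 1 / (L : ℝ) / 2 := by field_simp
    linarith
  obtain ⟨j, hj, hjc⟩ := exists_j L hL τ hτL hτ3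
  -- the integrand
  obtain ⟨q, hq⟩ : ∃ q : ℝ, q = (1 - b) / 2 := ⟨_, rfl⟩
  obtain ⟨X, hX⟩ : ∃ X : ℝ → ℝ, X = fun θ => (b + q) + (-q) * cos θ := ⟨_, rfl⟩
  obtain ⟨e, he⟩ : ∃ e : ℝ → ℝ, e = fun θ => (|X θ - a| - a) - X θ * P.eval (X θ) := ⟨_, rfl⟩
  have hXc : Continuous X := by rw [hX]; fun_prop
  have hec : Continuous e := by rw [he]; fun_prop
  have hX1 : ∀ θ, b ≤ X θ := by
    intro θ; rw [hX]; simp only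
    nlinarith [cos_le_one θ]
  have hX2 : ∀ θ, X θ ≤ 1 := by
    intro θ; rw [hX]; simp only
    nlinarith [neg_one_le_cos θ]
  have heX : ∀ θ, |e θ| ≤ ε * X θ := by
    intro θ; rw [he]
    exact hε (X θ) (by have := hX1 θ; linarith) (hX2 θ)
  have hXa : ∀ θ, |X θ - a| = q * |cos θ - cos τ| := by
    intro θ
    have : X θ - a = -(q * (cos θ - cos τ)) := by
      rw [hX]; simp only; rw [hcos, hq]; linear_combination hαb
    rw [this, abs_neg, abs_mul, abs_of_pos (by linarith : 0 < q)]
  have T : ∀ n : ℤ, (L : ℤ) + 1 < n → ∫ θ in (-π)..π, e θ * cos (n * (θ - τ)) =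
      -(q * (4 / ((n : ℝ) ^ 2 - 1) * (sin τ * cos (n * τ) ^ 2
        - cos τ * sin (n * τ) * cos (n * τ) / n))) := by
    intro n hn
    have h1 := int_abs τ hτ0 (by linarith) n (by omega)
    have h2 := int_poly_cos (b + q) (-q) (-(n * τ)) (Polynomial.C a + Polynomial.X * P) (L + 1)
      (by
        refine (Polynomial.natDegree_add_le _ _).trans (max_le (by simp) ?_)
        refine Polynomial.natDegree_mul_le.trans ?_
        rw [Polynomial.natDegree_X]; omega) n (by push_cast; exact hn)
    have h3 : ∀ θ, e θ * cos (n * (θ - τ)) = q * (|cos θ - cos τ| * cos (n * θ + (-(n * τ))))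
        - (Polynomial.C a + Polynomial.X * P).eval ((b + q) + (-q) * cos θ)
          * cos (n * θ + (-(n * τ))) := by
      intro θ
      have : (n : ℝ) * (θ - τ) = n * θ + (-(n * τ)) := by ring
      rw [this, he]; simp only
      rw [hXa]
      simp only [Polynomial.eval_add, Polynomial.eval_C, Polynomial.eval_mul, Polynomial.eval_X, hX]
      ring
    simp_rw [h3]
    rw [intervalIntegral.integral_sub (Continuous.intervalIntegrable (by fun_prop) _ _)
      (Continuous.intervalIntegrable (by fun_prop) _ _), intervalIntegral.integral_const_mul,
      h1, h2]
    ring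
  obtain ⟨N, hN⟩ : ∃ N : ℕ, N = 2 * L := ⟨_, rfl⟩
  have hNR : (N : ℝ) = 2 * L := by rw [hN]; push_cast; ring
  obtain ⟨δ, hδ⟩ : ∃ δ : ℝ, δ = q * (sin τ / (1000 * (L : ℝ) ^ 2)) := ⟨_, rfl⟩
  -- pairs
  have Pair : ∀ n : ℤ, 28 * (L : ℤ) ≤ n → n ≤ 32 * L →
      (∫ θ in (-π)..π, e θ * cos (n * (θ - τ)))
      + (∫ θ in (-π)..π, e θ * cos ((n + j : ℤ) * (θ - τ))) ≤ -δ := by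
    intro n hn1 hn2
    rw [T n (by omega), T (n + j) (by omega)]
    have hn1' : 28 * (L : ℝ) ≤ n := by exact_mod_cast hn1
    have hn2' : (n : ℝ) ≤ 32 * L := by exact_mod_cast hn2
    have hj' : (j : ℝ) ≤ 3 * L := by exact_mod_cast hj
    have := psi_pair L τ n j hLR hsL hn1' (by positivity) (by linarith) hjc
    push_cast
    rw [hδ]
    have hq0 : 0 ≤ q := by linarith
    have := mul_le_mul_of_nonneg_left this hq0
    linarith
  obtain ⟨M, hM⟩ : ∃ M : ℤ, M = 30 * L := ⟨_, rfl⟩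
  obtain ⟨K, hK⟩ : ∃ K : ℝ → ℝ, K = fun t => cos (M * t) + cos ((M + j : ℤ) * t) := ⟨_, rfl⟩
  have hKc : Continuous K := by rw [hK]; fun_prop
  have Term : ∀ d : ℤ, |d| ≤ 2 * L →
      ∫ θ in (-π)..π, e θ * (cos (d * (θ - τ)) * K (θ - τ)) ≤ -δ := by
    intro d hd
    obtain ⟨hd1, hd2⟩ := abs_le.1 hd
    have p1 := Pair (M + d) (by omega) (by omega)
    have p2 := Pair (M - d) (by omega) (by omega)
    have h3 : ∀ θ, e θ * (cos (d * (θ - τ)) * K (θ - τ)) =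
        (1 / 2) * ((e θ * cos ((M + d : ℤ) * (θ - τ)) + e θ * cos ((M + d + j : ℤ) * (θ - τ)))
        + (e θ * cos ((M - d : ℤ) * (θ - τ)) + e θ * cos ((M - d + j : ℤ) * (θ - τ)))) := by
      intro θ
      have g : ∀ m : ℤ, cos ((m + d : ℤ) * (θ - τ)) + cos ((m - d : ℤ) * (θ - τ))
          = 2 * cos (d * (θ - τ)) * cos (m * (θ - τ)) := by
        intro m
        have h1 : ((m + d : ℤ) : ℝ) * (θ - τ) = m * (θ - τ) + d * (θ - τ) := by push_cast; ring
        have h2 : ((m - d : ℤ) : ℝ) * (θ - τ) = m * (θ - τ) - d * (θ - τ) := by push_cast; ring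
        rw [h1, h2, cos_add, cos_sub]; ring
      have g1 := g M
      have g2 := g (M + j)
      rw [show M + j + d = M + d + j by ring, show M + j - d = M - d + j by ring] at g2
      rw [hK]; simp only
      linear_combination (-(1 / 2) * e θ) * (g1 + g2)
    simp_rw [h3]
    rw [intervalIntegral.integral_const_mul,
      intervalIntegral.integral_add (Continuous.intervalIntegrable (by fun_prop) _ _)
      (Continuous.intervalIntegrable (by fun_prop) _ _),
      intervalIntegral.integral_add (Continuous.intervalIntegrable (by fun_prop) _ _)
      (Continuous.intervalIntegrable (by fun_prop) _ _),
      intervalIntegral.integral_add (Continuous.intervalIntegrable (by fun_prop) _ _)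
      (Continuous.intervalIntegrable (by fun_prop) _ _)]
    linarith
  have hFc := F_cont N
  -- upper bound
  have U : ∫ θ in (-π)..π, e θ * (F N (θ - τ) * K (θ - τ))
      ≤ -δ * (∑ k ∈ Finset.range N, v N k) ^ 2 := by
    have h1 : ∀ θ, e θ * (F N (θ - τ) * K (θ - τ)) = ∑ k ∈ Finset.range N,
        ∑ l ∈ Finset.range N, v N k * v N l *
          (e θ * (cos (((k : ℤ) - l : ℤ) * (θ - τ)) * K (θ - τ))) := by
      intro θ
      unfold F
      rw [Finset.sum_mul, Finset.mul_sum]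
      refine Finset.sum_congr rfl fun k _ => ?_
      rw [Finset.sum_mul, Finset.mul_sum]
      refine Finset.sum_congr rfl fun l _ => ?_
      ring
    simp_rw [h1]
    rw [intervalIntegral.integral_finsetSum
      (fun i _ => Continuous.intervalIntegrable (by fun_prop) _ _), pow_two, Finset.sum_mul_sum,
      Finset.mul_sum]
    refine Finset.sum_le_sum fun k hk => ?_
    rw [intervalIntegral.integral_finsetSum
      (fun i _ => Continuous.intervalIntegrable (by fun_prop) _ _), Finset.mul_sum]
    refine Finset.sum_le_sum fun l hl => ?_
    rw [intervalIntegral.integral_const_mul]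
    have hk' := Finset.mem_range.1 hk
    have hl' := Finset.mem_range.1 hl
    have := Term ((k : ℤ) - l) (by rw [abs_le]; constructor <;> omega)
    have h0 := mul_nonneg (v_nonneg hk') (v_nonneg hl')
    have := mul_le_mul_of_nonneg_left this h0
    linarith
  -- lower bound
  have W : -(2 * ε * ∫ θ in (-π)..π, X θ * F N (θ - τ))
      ≤ ∫ θ in (-π)..π, e θ * (F N (θ - τ) * K (θ - τ)) := by
    rw [← intervalIntegral.integral_const_mul, ← intervalIntegral.integral_neg]
    apply intervalIntegral.integral_mono_on (by linarith)
      (Continuous.intervalIntegrable (by fun_prop) _ _)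
      (Continuous.intervalIntegrable (by fun_prop) _ _)
    intro θ _
    have hK2 : |K (θ - τ)| ≤ 2 := by
      rw [hK]
      refine (abs_add_le _ _).trans ?_
      have := abs_cos_le_one (M * (θ - τ))
      have := abs_cos_le_one ((M + j : ℤ) * (θ - τ))
      linarith
    have hF := F_nonneg N (θ - τ)
    have : |e θ * (F N (θ - τ) * K (θ - τ))| ≤ 2 * ε * (X θ * F N (θ - τ)) := by
      rw [abs_mul, abs_mul, abs_of_nonneg hF]
      have h1 : F N (θ - τ) * |K (θ - τ)| ≤ F N (θ - τ) * 2 :=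
        mul_le_mul_of_nonneg_left hK2 hF
      have h2 := mul_le_mul (heX θ) h1 (by positivity) (by
        have := hX1 θ
        exact mul_nonneg hε0 (by linarith))
      linarith
    exact (abs_le.1 this).1
  have V : ∫ θ in (-π)..π, X θ * F N (θ - τ) =
      (b + q) * (2 * π * ∑ k ∈ Finset.range N, v N k * v N k)
      - q * (2 * π * cos τ * ∑ k ∈ Finset.range N, v N k * v N (k + 1)) := by
    rw [← int_F N τ, ← int_F_cos, ← intervalIntegral.integral_const_mul,
      ← intervalIntegral.integral_const_mul,
      ← intervalIntegral.integral_sub (Continuous.intervalIntegrable (by fun_prop) _ _)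
      (Continuous.intervalIntegrable (by fun_prop) _ _)]
    congr 1; ext θ; rw [hX]; ring
  rw [V, sum_v_sq, sum_v_shift] at W
  rw [sum_v] at U
  have key := W.trans U
  obtain ⟨w, hw⟩ : ∃ w : ℝ, w = N * ((N : ℝ) ^ 4 - 1) / 30 := ⟨_, rfl⟩
  obtain ⟨w1, hw1⟩ : ∃ w1 : ℝ, w1 = N * ((N : ℝ) ^ 2 - 1) * ((N : ℝ) ^ 2 - 4) / 30 := ⟨_, rfl⟩
  rw [← hw, ← hw1] at key
  have hN2 : (2 : ℝ) ≤ N := by linarith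
  have hNN : (4 : ℝ) ≤ (N : ℝ) ^ 2 := by
    have := pow_le_pow_left₀ (by norm_num) hN2 2
    linarith
  have hw0 : 0 < w := by
    rw [hw, show (N : ℝ) * ((N : ℝ) ^ 4 - 1) / 30
      = N * (((N : ℝ) ^ 2 - 1) * ((N : ℝ) ^ 2 + 1)) / 30 by ring]
    have : 0 < (N : ℝ) ^ 2 - 1 := by linarith
    positivity
  have hw10 : 0 ≤ w1 := by
    rw [hw1]
    have : 0 ≤ (N : ℝ) ^ 2 - 1 := by linarith
    have : 0 ≤ (N : ℝ) ^ 2 - 4 := by linarith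
    positivity
  have hdiff : (w - w1) * ((N : ℝ) ^ 2 + 1) = 5 * w := by rw [hw, hw1]; ring
  have hN2a : 1 ≤ a * (N : ℝ) ^ 2 := by
    rw [div_le_iff₀ (by positivity)] at haL
    have e : a * (2 * (L : ℝ)) ^ 2 = 4 * (a * (L : ℝ) ^ 2) := by ring
    rw [hNR, e]; linarith
  have hww : w - w1 ≤ 5 * a * w := by
    have h0 : 0 ≤ w - w1 := by
      by_contra h
      push Not at h
      have := mul_neg_of_neg_of_pos h (by positivity : (0 : ℝ) < (N : ℝ) ^ 2 + 1)
      linarith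
    have h2 : (w - w1) * 1 ≤ (w - w1) * (a * ((N : ℝ) ^ 2 + 1)) :=
      mul_le_mul_of_nonneg_left (by linarith) h0
    have h3 : (w - w1) * (a * ((N : ℝ) ^ 2 + 1)) = a * (5 * w) := by rw [← hdiff]; ring
    linarith
  have hw1w : w1 ≤ w := by
    by_contra h
    push Not at h
    have := mul_neg_of_neg_of_pos (sub_neg.2 h) (by positivity : (0 : ℝ) < (N : ℝ) ^ 2 + 1)
    linarith
  have hS : (L : ℝ) * w ≤ (N * ((N : ℝ) ^ 2 - 1) / 6) ^ 2 := by
    have hLN : (L : ℝ) = N / 2 := by linarith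
    rw [hLN, hw]
    have : (N * ((N : ℝ) ^ 2 - 1) / 6) ^ 2 - (N : ℝ) / 2 * (N * ((N : ℝ) ^ 4 - 1) / 30)
      = (N : ℝ) ^ 2 * ((N : ℝ) ^ 2 - 1) * (5 * ((N : ℝ) ^ 2 - 1) - 3 * ((N : ℝ) ^ 2 + 1)) / 180 := by
      ring
    have h1 : 0 ≤ (N : ℝ) ^ 2 - 1 := by linarith
    have h2 : 0 ≤ 5 * ((N : ℝ) ^ 2 - 1) - 3 * ((N : ℝ) ^ 2 + 1) := by linarith
    have : 0 ≤ (N : ℝ) ^ 2 * ((N : ℝ) ^ 2 - 1)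
      * (5 * ((N : ℝ) ^ 2 - 1) - 3 * ((N : ℝ) ^ 2 + 1)) / 180 := by positivity
    linarith
  have hbig : (b + q) * (2 * π * w) - q * (2 * π * cos τ * w1) ≤ 32 * a * w := by
    have e1 : (b + q) * (2 * π * w) - q * (2 * π * cos τ * w1)
      = 2 * π * (b * w + q * (w - w1) + (a - b) * w1) := by
      rw [hcos]
      linear_combination (2 * π * w1) * hαb + 4 * π * w1 * α * hq
    rw [e1]
    have e2 : b * w + q * (w - w1) + (a - b) * w1 ≤ 4 * a * w := by
      have f1 : (a - b) * w1 ≤ (a - b) * w := mul_le_mul_of_nonneg_left hw1w (by linarith)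
      have f2 : q * (w - w1) ≤ (1 / 2) * (w - w1) :=
        mul_le_mul_of_nonneg_right (by linarith) (by linarith)
      nlinarith [mul_pos ha0 hw0]
    have e3 : 0 ≤ 4 * a * w := by positivity
    nlinarith [pi_lt_four]
  have hδ0 : 0 ≤ δ := by
    rw [hδ]
    have : 0 ≤ q := by linarith
    positivity
  have hfin : δ * (L * w) ≤ 64 * ε * a * w := by
    have g1 := mul_le_mul_of_nonneg_left hS hδ0
    have g2 := mul_le_mul_of_nonneg_left hbig (by linarith : 0 ≤ 2 * ε)
    linarith
  have hfin2 : δ * L ≤ 64 * ε * a := by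
    have : (δ * L) * w ≤ (64 * ε * a) * w := by linarith
    exact le_of_mul_le_mul_right this hw0
  have hδL : √a / (8000 * L) ≤ δ * L := by
    have h1 : δ * L = q * sin τ / (1000 * L) := by rw [hδ]; field_simp
    rw [h1, div_le_div_iff₀ (by positivity) (by positivity)]
    have : √a / 8 ≤ q * sin τ := by nlinarith
    nlinarith
  have h9 := hδL.trans hfin2
  rw [div_le_iff₀ (by positivity)] at h9
  rw [div_le_iff₀ (by positivity)]
  have h10 : √a * 1 ≤ √a * (64 * 8000 * (ε * (L * √a))) := by
    calc √a * 1 ≤ 64 * ε * a * (8000 * L) := by linarith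
      _ = 64 * ε * (√a ^ 2) * (8000 * L) := by rw [hsq]
      _ = _ := by ring
  have := le_of_mul_le_mul_left h10 hsa
  linarith

lemma sup_bound (a : ℝ) (ha0 : 0 < a) (P : Polynomial ℝ) (x : ℝ)
    (h1 : 3 * a / 4 ≤ x) (h2 : x ≤ 1) :
    |(|x - a| - a) - x * P.eval x| ≤
      (⨆ x : Set.Icc (a / (4 / 3)) (1 : ℝ),
                |(|(x : ℝ) - a| - a) / (x : ℝ) - P.eval (x : ℝ)|) * x := by
  have hx : 0 < x := by linarith
  have hbdd : BddAbove (Set.range fun x : Set.Icc (a / (4 / 3)) (1 : ℝ) =>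
      |(|(x : ℝ) - a| - a) / (x : ℝ) - P.eval (x : ℝ)|) := by
    apply IsCompact.bddAbove
    apply isCompact_range
    have hne : ∀ x : Set.Icc (a / (4 / 3)) (1 : ℝ), (x : ℝ) ≠ 0 := by
      intro x
      have := x.2.1
      have : 0 < a / (4 / 3) := by positivity
      linarith
    fun_prop (disch := exact hne)
  have := le_ciSup hbdd ⟨x, by linarith, h2⟩
  simp only at this
  refine le_trans ?_ (mul_le_mul_of_nonneg_right this hx.le)
  rw [← abs_of_pos hx, ← abs_mul, abs_of_pos hx]
  apply le_of_eq
  congr 1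
  field_simp

end FXA

/-- lower bound on the best polynomial approximation error
`E_L[f(·;a); [a/D, 1]]` of `f(x;a) = (|x−a|−a)/x`. Since `E_L` is an infimum over
polynomials of degree at most `L`, a lower bound on it is expressed as the same lower
bound on the uniform error of every such polynomial. -/
theorem approx_lower_bound_fxa :
    ∃ D c : ℝ, 1 < D ∧ 0 < c ∧
      ∀ L : ℕ, 1 ≤ L → ∀ a : ℝ, 0 < a → a ≤ 1 / 2 →
        ∀ P : Polynomial ℝ, P.natDegree ≤ L →
          ((1 / (L : ℝ) ^ 2 ≤ a →
            c / (L * Real.sqrt a) ≤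
              ⨆ x : Set.Icc (a / D) (1 : ℝ),
                |(|(x : ℝ) - a| - a) / (x : ℝ) - P.eval (x : ℝ)|) ∧
          (a < 1 / (L : ℝ) ^ 2 →
            c ≤ ⨆ x : Set.Icc (a / D) (1 : ℝ),
                |(|(x : ℝ) - a| - a) / (x : ℝ) - P.eval (x : ℝ)|)) := by
  refine ⟨4 / 3, 1 / 2000000, by norm_num, by norm_num, ?_⟩
  intro L hL a ha0 ha P hP
  have hLR : (1 : ℝ) ≤ L := by exact_mod_cast hL
  have hsa : 0 < √a := Real.sqrt_pos.2 ha0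
  constructor
  · intro h
    have := FXA.core L hL a ha0 ha h P hP _ (FXA.sup_bound a ha0 P)
    refine le_trans ?_ this
    apply div_le_div_of_nonneg_right (by norm_num) (by positivity)
  · intro h
    have hsq : √a ^ 2 = a := Real.sq_sqrt ha0.le
    have hs1 : √a ≤ 1 := Real.sqrt_le_one.2 (by linarith)
    have c1 : 1 / √a ≤ ⌈1 / √a⌉₊ := Nat.le_ceil _
    have c2 : (⌈1 / √a⌉₊ : ℝ) < 1 / √a + 1 := Nat.ceil_lt_add_one (by positivity)
    have hLs : (L : ℝ) ≤ 1 / √a := by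
      rw [le_div_iff₀ hsa]
      rw [lt_div_iff₀ (by positivity)] at h
      have : (L * √a) ^ 2 ≤ 1 ^ 2 := by rw [mul_pow, hsq]; linarith
      exact (sq_le_sq₀ (by positivity) (by norm_num)).1 this
    obtain ⟨L', hL'⟩ : ∃ L' : ℕ, L' = ⌈1 / √a⌉₊ := ⟨_, rfl⟩
    rw [← hL'] at c1 c2
    have hLL : L ≤ L' := by
      have : (L : ℝ) ≤ L' := hLs.trans c1
      exact_mod_cast this
    have hL'R : (1 : ℝ) ≤ L' := by exact_mod_cast hL.trans hLL
    have c3 : 1 ≤ L' * √a := by rwa [div_le_iff₀ hsa] at c1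
    have c4 : L' * √a ≤ 2 := by
      have : L' * √a ≤ (1 / √a + 1) * √a := by nlinarith
      have e : (1 / √a + 1) * √a = 1 + √a := by field_simp
      linarith
    have h' : 1 / (L' : ℝ) ^ 2 ≤ a := by
      rw [div_le_iff₀ (by positivity), ← hsq, ← mul_pow, mul_comm]
      nlinarith
    have := FXA.core L' (hL.trans hLL) a ha0 ha h' P (hP.trans hLL) _ (FXA.sup_bound a ha0 P)
    refine le_trans ?_ this
    rw [le_div_iff₀ (by positivity)]
    linarith
end

section
/- Let a > 0 and 0 ≤ M ≤ a, let L be a nonnegative integer, and let U₀, U₁ be random variables supported on [a − M, a + M] with E[U₀^j] = E[U₁^j] for all 0 ≤ j ≤ L. For i = 0,1, let F_i be the distribution on the nonnegative integers of X, where conditionally on λ ~ U_i one has X ~ Poisson(λ) (i.e., F_i is the Poisson mixture with mixing distribution U_i). If L + 1 ≥ (2eM)²/a, then the total variation distance satisfies V(F₀, F₁) ≤ 2·( eM/√(a(L+1)) )^{L+1}. -/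
open scoped BigOperators
open MeasureTheory

theorem aux_congr {f g : ℕ → ℝ} {s t : ℝ} (h : HasSum f s) (hf : ∀ k, g k = f k)
    (hs : t = s) : HasSum g t := by
  rw [hs, funext hf]; exact h

theorem aux_hasSum_prod (μ ν : Measure ℝ) [IsProbabilityMeasure μ] [IsProbabilityMeasure ν]
    (K : Set ℝ) (hμ : ∀ᵐ x ∂μ, x ∈ K) (hν : ∀ᵐ x ∂ν, x ∈ K)
    (f : ℕ → ℝ → ℝ) (hf : ∀ k, Continuous (f k)) (b c : ℕ → ℝ) (hc : ∀ k, 0 ≤ c k)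
    (hb : ∀ k, ∀ x ∈ K, |f k x| ≤ b k) (hs : Summable fun k => c k * b k ^ 2)
    (G : ℝ → ℝ → ℝ) (hG : ∀ x y, HasSum (fun k => c k * (f k x * f k y)) (G x y)) :
    HasSum (fun k => c k * ((∫ x, f k x ∂μ) * ∫ x, f k x ∂ν))
      (∫ z : ℝ × ℝ, G z.1 z.2 ∂(μ.prod ν)) := by
  have h1 : ∀ᵐ z ∂(μ.prod ν), z.1 ∈ K := Measure.quasiMeasurePreserving_fst.ae hμ
  have h2 : ∀ᵐ z ∂(μ.prod ν), z.2 ∈ K := Measure.quasiMeasurePreserving_snd.ae hν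
  have hbd : ∀ k, ∀ᵐ z ∂(μ.prod ν), ‖c k * (f k z.1 * f k z.2)‖ ≤ c k * b k ^ 2 := by
    intro k
    filter_upwards [h1, h2] with z hz1 hz2
    rw [norm_mul, norm_mul, Real.norm_of_nonneg (hc k), Real.norm_eq_abs, Real.norm_eq_abs, sq]
    have := hb k _ hz1
    have := hb k _ hz2
    have := hc k
    have : 0 ≤ b k := (abs_nonneg _).trans (hb k _ hz1)
    gcongr
  have hFint : ∀ k, Integrable (fun z : ℝ × ℝ => c k * (f k z.1 * f k z.2)) (μ.prod ν) := by
    intro k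
    refine Integrable.of_bound (C := c k * b k ^ 2) ?_ (hbd k)
    have := hf k
    exact Continuous.aestronglyMeasurable (by fun_prop)
  have key := hasSum_integral_of_summable_integral_norm (μ := μ.prod ν)
    (F := fun k (z : ℝ × ℝ) => c k * (f k z.1 * f k z.2)) hFint ?_
  · have e1 : ∀ z : ℝ × ℝ, ∑' k, c k * (f k z.1 * f k z.2) = G z.1 z.2 :=
      fun z => (hG z.1 z.2).tsum_eq
    simp only [e1] at key
    refine aux_congr key (fun k => ?_) rfl
    rw [integral_const_mul, integral_prod_mul]
  · refine Summable.of_nonneg_of_le (fun k => integral_nonneg fun z => norm_nonneg _) ?_ hs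
    intro k
    calc _ ≤ ∫ z : ℝ × ℝ, c k * b k ^ 2 ∂(μ.prod ν) :=
          integral_mono_ae (hFint k).norm (integrable_const _) (hbd k)
      _ = _ := by simp

theorem aux_hasSum_sq (μ ν : Measure ℝ) [IsProbabilityMeasure μ] [IsProbabilityMeasure ν]
    (K : Set ℝ) (hμ : ∀ᵐ x ∂μ, x ∈ K) (hν : ∀ᵐ x ∂ν, x ∈ K)
    (f : ℕ → ℝ → ℝ) (hf : ∀ k, Continuous (f k)) (b c : ℕ → ℝ) (hc : ∀ k, 0 ≤ c k)
    (hb : ∀ k, ∀ x ∈ K, |f k x| ≤ b k) (hs : Summable fun k => c k * b k ^ 2)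
    (G : ℝ → ℝ → ℝ) (hG : ∀ x y, HasSum (fun k => c k * (f k x * f k y)) (G x y)) :
    HasSum (fun k => c k * ((∫ x, f k x ∂μ) - ∫ x, f k x ∂ν) ^ 2)
      ((∫ z : ℝ × ℝ, G z.1 z.2 ∂(μ.prod μ)) - (∫ z : ℝ × ℝ, G z.1 z.2 ∂(μ.prod ν))
        - (∫ z : ℝ × ℝ, G z.1 z.2 ∂(ν.prod μ)) + (∫ z : ℝ × ℝ, G z.1 z.2 ∂(ν.prod ν))) := by
  have A := aux_hasSum_prod μ μ K hμ hμ f hf b c hc hb hs G hG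
  have B := aux_hasSum_prod μ ν K hμ hν f hf b c hc hb hs G hG
  have C := aux_hasSum_prod ν μ K hν hμ f hf b c hc hb hs G hG
  have D := aux_hasSum_prod ν ν K hν hν f hf b c hc hb hs G hG
  refine aux_congr (((A.sub B).sub C).add D) (fun k => ?_) rfl
  ring

theorem aux_hasSum_exp (x : ℝ) : HasSum (fun k : ℕ => x ^ k / (Nat.factorial k : ℝ)) (Real.exp x) := by
  rw [Real.exp_eq_exp_ℝ]
  exact NormedSpace.expSeries_div_hasSum_exp x

/-- total variation bound between two Poisson mixtures whose mixing
distributions are supported on `[a-M, a+M]` and share the first `L` moments. -/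
theorem poisson_mixture_tv_bound (a M : ℝ) (ha : 0 < a) (hM0 : 0 ≤ M) (hMa : M ≤ a)
    (L : ℕ) (μ₀ μ₁ : Measure ℝ) [IsProbabilityMeasure μ₀] [IsProbabilityMeasure μ₁]
    (hsupp₀ : μ₀ (Set.Icc (a - M) (a + M))ᶜ = 0)
    (hsupp₁ : μ₁ (Set.Icc (a - M) (a + M))ᶜ = 0)
    (hmom : ∀ j : ℕ, j ≤ L → ∫ x, x ^ j ∂μ₀ = ∫ x, x ^ j ∂μ₁)
    (hL : (2 * Real.exp 1 * M) ^ 2 / a ≤ (L : ℝ) + 1) :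
    (1 / 2) * ∑' k : ℕ,
        |(∫ lam, poissonPMF lam k ∂μ₀) - ∫ lam, poissonPMF lam k ∂μ₁| ≤
      2 * (Real.exp 1 * M / Real.sqrt (a * ((L : ℝ) + 1))) ^ (L + 1) := by
  have h0 : ∀ᵐ x ∂μ₀, x ∈ Set.Icc (a - M) (a + M) := hsupp₀
  have h1 : ∀ᵐ x ∂μ₁, x ∈ Set.Icc (a - M) (a + M) := hsupp₁
  set G : ℝ → ℝ → ℝ := fun x y => Real.exp ((x - a) * (y - a) / a) with hGdef
  set J : ℝ := ((∫ z : ℝ × ℝ, G z.1 z.2 ∂(μ₀.prod μ₀)) - (∫ z : ℝ × ℝ, G z.1 z.2 ∂(μ₀.prod μ₁))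
        - (∫ z : ℝ × ℝ, G z.1 z.2 ∂(μ₁.prod μ₀)) + (∫ z : ℝ × ℝ, G z.1 z.2 ∂(μ₁.prod μ₁)))
    with hJ
  -- Poisson expansion
  have S1 : HasSum (fun k : ℕ => (Real.exp a * (Nat.factorial k : ℝ) / a ^ k) *
      ((∫ x, poissonPMF x k ∂μ₀) - ∫ x, poissonPMF x k ∂μ₁) ^ 2) J := by
    refine aux_hasSum_sq μ₀ μ₁ _ h0 h1 (fun k x => poissonPMF x k) ?_
      (fun k => (2 * a) ^ k / (Nat.factorial k : ℝ)) _ ?_ ?_ ?_ G ?_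
    · intro k; unfold poissonPMF; fun_prop
    · intro k; positivity
    · intro k x hx
      have hx0 : 0 ≤ x := by linarith [hx.1]
      have hx2 : x ≤ 2 * a := by linarith [hx.2]
      unfold poissonPMF
      rw [abs_of_nonneg (by positivity)]
      have : Real.exp (-x) ≤ 1 := Real.exp_le_one_iff.2 (by linarith)
      gcongr
      calc Real.exp (-x) * x ^ k ≤ 1 * (2 * a) ^ k := by gcongr
        _ = _ := one_mul _
    · refine (aux_congr ((aux_hasSum_exp (4 * a)).mul_left (Real.exp a)) (fun k => ?_) rfl).summable
      have : (4 * a) ^ k = (2 * a) ^ k * (2 * a) ^ k / a ^ k := by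
        rw [← mul_pow, ← div_pow]; congr 1; field_simp; ring
      rw [this]
      field_simp
    · intro x y
      refine aux_congr ((aux_hasSum_exp (x * y / a)).mul_left (Real.exp (a - x - y))) (fun k => ?_) ?_
      · unfold poissonPMF
        rw [div_pow, mul_pow, sub_sub, sub_eq_add_neg, neg_add, Real.exp_add, Real.exp_add]
        field_simp
      · rw [hGdef, ← Real.exp_add]
        congr 1
        field_simp
        ring
  -- moment expansion
  have S2 : HasSum (fun k : ℕ => (1 / ((Nat.factorial k : ℝ) * a ^ k)) *
      ((∫ x, (x - a) ^ k ∂μ₀) - ∫ x, (x - a) ^ k ∂μ₁) ^ 2) J := by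
    refine aux_hasSum_sq μ₀ μ₁ _ h0 h1 (fun k x => (x - a) ^ k) ?_
      (fun k => M ^ k) _ ?_ ?_ ?_ G ?_
    · intro k; fun_prop
    · intro k; positivity
    · intro k x hx
      rw [abs_pow]
      have : |x - a| ≤ M := abs_le.2 ⟨by linarith [hx.1], by linarith [hx.2]⟩
      gcongr
    · refine (aux_congr (aux_hasSum_exp (M ^ 2 / a)) (fun k => ?_) rfl).summable
      rw [div_pow, ← pow_mul, ← pow_mul, mul_comm k 2]
      field_simp
    · intro x y
      refine aux_congr (aux_hasSum_exp ((x - a) * (y - a) / a)) (fun k => ?_) rfl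
      rw [div_pow, mul_pow]
      field_simp
  have hpowint : ∀ (μ : Measure ℝ) [IsProbabilityMeasure μ],
      (∀ᵐ x ∂μ, x ∈ Set.Icc (a - M) (a + M)) → ∀ j : ℕ, Integrable (fun x : ℝ => x ^ j) μ := by
    intro μ _ h j
    refine Integrable.of_bound (C := (a + M) ^ j)
      (Continuous.aestronglyMeasurable (by fun_prop)) ?_
    filter_upwards [h] with x hx
    have : |x| ≤ a + M := abs_le.2 ⟨by linarith [hx.1], by linarith [hx.2]⟩
    rw [norm_pow, Real.norm_eq_abs]
    gcongr
  have hexp : ∀ (μ : Measure ℝ) [IsProbabilityMeasure μ],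
      (∀ᵐ x ∂μ, x ∈ Set.Icc (a - M) (a + M)) → ∀ j : ℕ, ∫ x, (x - a) ^ j ∂μ =
        ∑ m ∈ Finset.range (j + 1), (∫ x, x ^ m ∂μ) * ((-a) ^ (j - m) * (j.choose m : ℝ)) := by
    intro μ _ h j
    simp_rw [sub_eq_add_neg, add_pow, mul_assoc]
    rw [integral_finsetSum]
    · simp_rw [integral_mul_const]
    · intro m _
      exact (hpowint μ h m).mul_const _
  have hzero : ∀ j ≤ L, (∫ x, (x - a) ^ j ∂μ₀) - ∫ x, (x - a) ^ j ∂μ₁ = 0 := by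
    intro j hj
    rw [hexp μ₀ h0, hexp μ₁ h1, sub_eq_zero]
    refine Finset.sum_congr rfl fun m hm => ?_
    rw [hmom m (by have := Finset.mem_range.1 hm; omega)]
  have hmb : ∀ (μ : Measure ℝ) [IsProbabilityMeasure μ],
      (∀ᵐ x ∂μ, x ∈ Set.Icc (a - M) (a + M)) → ∀ j : ℕ, |∫ x, (x - a) ^ j ∂μ| ≤ M ^ j := by
    intro μ _ h j
    have := norm_integral_le_of_norm_le_const (μ := μ) (f := fun x => (x - a) ^ j) (C := M ^ j) ?_
    · simpa using this
    · filter_upwards [h] with x hx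
      have : |x - a| ≤ M := abs_le.2 ⟨by linarith [hx.1], by linarith [hx.2]⟩
      rw [norm_pow, Real.norm_eq_abs]
      gcongr
  set n : ℝ := (L : ℝ) + 1 with hn
  have hnpos : 0 < n := by positivity
  set q : ℝ := Real.exp 1 * M / Real.sqrt (a * n) with hq
  have hq0 : 0 ≤ q := by positivity
  have hq2 : q ^ 2 = (Real.exp 1 * M) ^ 2 / (a * n) := by
    rw [hq, div_pow, Real.sq_sqrt (by positivity)]
  have hq4 : q ^ 2 ≤ 1 / 4 := by
    rw [hq2, div_le_iff₀ (by positivity)]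
    rw [div_le_iff₀ ha] at hL
    nlinarith
  have hterm : ∀ j : ℕ, L + 1 ≤ j → (1 / ((Nat.factorial j : ℝ) * a ^ j)) *
      ((∫ x, (x - a) ^ j ∂μ₀) - ∫ x, (x - a) ^ j ∂μ₁) ^ 2 ≤ 4 * (q ^ 2) ^ j := by
    intro j hj
    have hD : ((∫ x, (x - a) ^ j ∂μ₀) - ∫ x, (x - a) ^ j ∂μ₁) ^ 2 ≤ (2 * M ^ j) ^ 2 := by
      have t0 := abs_le.1 (hmb μ₀ h0 j)
      have t1 := abs_le.1 (hmb μ₁ h1 j)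
      exact sq_le_sq' (by linarith) (by linarith)
    have hnj : n ≤ j := by rw [hn]; exact_mod_cast hj
    have he : n ^ j / (Nat.factorial j : ℝ) ≤ Real.exp 1 ^ (2 * j) := by
      calc _ ≤ Real.exp n := Real.pow_div_factorial_le_exp n hnpos.le j
        _ ≤ Real.exp ((2 * j : ℕ) * 1) := by
          apply Real.exp_le_exp.2; push_cast; nlinarith
        _ = _ := Real.exp_nat_mul _ _
    calc _ ≤ (1 / ((Nat.factorial j : ℝ) * a ^ j)) * (2 * M ^ j) ^ 2 := by gcongr
      _ = 4 * (M ^ 2 / (a * n)) ^ j * (n ^ j / (Nat.factorial j : ℝ)) := by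
        rw [div_pow, mul_pow a n, ← pow_mul, mul_comm 2 j, pow_mul]
        field_simp
        ring
      _ ≤ 4 * (M ^ 2 / (a * n)) ^ j * Real.exp 1 ^ (2 * j) := by gcongr
      _ = 4 * (q ^ 2) ^ j := by
        rw [hq2, pow_mul, mul_assoc, ← mul_pow]
        congr 2
        ring
  have hJle : J ≤ (4 * q ^ (L + 1)) ^ 2 := by
    have hS := (hasSum_nat_add_iff' (L + 1)).2 S2
    have hz : ∑ i ∈ Finset.range (L + 1), (1 / ((Nat.factorial i : ℝ) * a ^ i)) *
      ((∫ x, (x - a) ^ i ∂μ₀) - ∫ x, (x - a) ^ i ∂μ₁) ^ 2 = 0 := by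
      refine Finset.sum_eq_zero fun i hi => ?_
      rw [hzero i (by have := Finset.mem_range.1 hi; omega)]
      simp
    rw [hz, sub_zero] at hS
    have hg := (hasSum_geometric_of_lt_one (r := (1 / 4 : ℝ)) (by norm_num) (by norm_num)).mul_left
      (4 * (q ^ 2) ^ (L + 1))
    have := hasSum_le (fun i => ?_) hS hg
    · refine this.trans ?_
      rw [mul_pow, ← pow_mul, ← pow_mul, mul_comm (L + 1) 2]
      have : 0 ≤ q ^ (2 * (L + 1)) := by positivity
      norm_num
      linarith
    · refine (hterm (i + (L + 1)) (by omega)).trans ?_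
      rw [pow_add, mul_comm ((q ^ 2) ^ i), mul_assoc]
      gcongr
  have hP : HasSum (fun k : ℕ => 1 / (Real.exp a * (Nat.factorial k : ℝ) / a ^ k)) 1 := by
    refine aux_congr ((aux_hasSum_exp a).mul_left (Real.exp (-a))) (fun k => ?_) ?_
    · rw [Real.exp_neg]; field_simp
    · rw [← Real.exp_add]; simp
  have hfin : ∑' k : ℕ, |(∫ lam, poissonPMF lam k ∂μ₀) - ∫ lam, poissonPMF lam k ∂μ₁|
      ≤ 4 * q ^ (L + 1) := by
    refine Real.tsum_le_of_sum_le (fun _ => abs_nonneg _) fun s => ?_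
    refine abs_le_of_sq_le_sq' ?_ (by positivity) |>.2
    refine le_trans ?_ hJle
    have hcs := Finset.sum_sq_le_sum_mul_sum_of_sq_eq_mul s
      (r := fun k : ℕ => |(∫ lam, poissonPMF lam k ∂μ₀) - ∫ lam, poissonPMF lam k ∂μ₁|)
      (f := fun k : ℕ => (Real.exp a * (Nat.factorial k : ℝ) / a ^ k) *
      ((∫ x, poissonPMF x k ∂μ₀) - ∫ x, poissonPMF x k ∂μ₁) ^ 2)
      (g := fun k : ℕ => 1 / (Real.exp a * (Nat.factorial k : ℝ) / a ^ k))
      (fun i _ => by positivity) (fun i _ => by positivity)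
      (fun i _ => by rw [sq_abs]; field_simp)
    refine hcs.trans ?_
    have u1 := sum_le_hasSum s (fun i _ => by positivity) S1
    have u2 := sum_le_hasSum s (fun i _ => by positivity) hP
    have u3 : 0 ≤ J := S1.nonneg fun i => by positivity
    calc _ ≤ J * 1 := by
          refine mul_le_mul u1 u2 (Finset.sum_nonneg fun i _ => by positivity) u3
      _ = J := mul_one _
  linarith
end
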